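/- arXiv:1801.03359 — 4 statements merged into one kernel-verified Lean document; each statement's English description precedes it below -/
import Mathlib

section
/- Assume f satisfies (A1)–(A3) and fix χ > 0. If μ is an f-adapted χ-expanding f-invariant Borel probability measure on M and μ̂ is a lift of μ to M̂, then μ̂(NUE*_χ) = 1. -/
open Real MeasureTheory Filter Topology Metric Set

noncomputable section

namespace OneDim

/-- The interval `M = [0, 1/2]`. -/
def Mset : Set ℝ := Set.Icc 0 (1/2)

/-- Data of a piecewise `C^{1+β}` interval map `f : M → M` with discontinuity set `D`,
constants `β ∈ (0,1)`, `a, K > 1`, radius function `r` and inverse branches `g`. -/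
structure GoodMap where
  f : ℝ → ℝ
  D : Set ℝ
  β : ℝ
  a : ℝ
  K : ℝ
  r : ℝ → ℝ
  g : ℝ → ℝ → ℝ
  hβ0 : 0 < β
  hβ1 : β < 1
  ha : 1 < a
  hK : 1 < K
  hmaps : ∀ x ∈ Mset, f x ∈ Mset
  hD : D ⊆ Mset
  hdiff : DifferentiableOn ℝ f (Mset \ D)

namespace GoodMap

/-- The critical set `C = {x ∈ M \ D : df_x = 0}`. -/
def crit (F : GoodMap) : Set ℝ := {x | x ∈ Mset \ F.D ∧ deriv F.f x = 0}

/-- The singular set `S = C ∪ D`. -/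
def S (F : GoodMap) : Set ℝ := F.crit ∪ F.D

/-- Distance to the singular set. -/
def dS (F : GoodMap) (x : ℝ) : ℝ := Metric.infDist x F.S

/-- Conditions (A1)–(A3). -/
def SatA (F : GoodMap) : Prop :=
  ∀ x ∈ Mset, x ∉ F.S → F.f x ∉ F.S →
    (min (F.dS x ^ F.a) (F.dS (F.f x) ^ F.a) < F.r x ∧ F.r x < 1) ∧
    -- (A1)
    (Set.InjOn F.f (Metric.ball x (2 * F.r x)) ∧
      (∀ y ∈ Metric.ball x (2 * F.r x), DifferentiableAt ℝ F.f y) ∧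
      F.g x (F.f x) = x ∧
      (∀ z ∈ Metric.ball (F.f x) (2 * F.r x), F.f (F.g x z) = z) ∧
      Set.InjOn (F.g x) (Metric.ball (F.f x) (2 * F.r x)) ∧
      (∀ z ∈ Metric.ball (F.f x) (2 * F.r x), DifferentiableAt ℝ (F.g x) z)) ∧
    -- (A2)
    ((∀ y ∈ Metric.ball x (2 * F.r x),
        F.dS x ^ F.a ≤ |deriv F.f y| ∧ |deriv F.f y| ≤ F.dS x ^ (-F.a)) ∧
      (∀ z ∈ Metric.ball (F.f x) (2 * F.r x),
        F.dS x ^ F.a ≤ |deriv (F.g x) z| ∧ |deriv (F.g x) z| ≤ F.dS x ^ (-F.a))) ∧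
    -- (A3)
    ((∀ y ∈ Metric.ball x (2 * F.r x), ∀ z ∈ Metric.ball x (2 * F.r x),
        |deriv F.f y - deriv F.f z| ≤ F.K * |y - z| ^ F.β) ∧
      (∀ y ∈ Metric.ball (F.f x) (2 * F.r x), ∀ z ∈ Metric.ball (F.f x) (2 * F.r x),
        |deriv (F.g x) y - deriv (F.g x) z| ≤ F.K * |y - z| ^ F.β))

end GoodMap

/-- Membership in the natural extension space `M̂`. -/
def inMhat (f : ℝ → ℝ) (x : ℤ → ℝ) : Prop :=
  (∀ n, x n ∈ Mset) ∧ ∀ n : ℤ, f (x (n - 1)) = x n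

/-- The natural extension map `f̂` (left shift). -/
def fhat (x : ℤ → ℝ) : ℤ → ℝ := fun n => x (n + 1)

/-- Iterate `f̂^k` of the natural extension map, `k ∈ ℤ`. -/
def fhatI (k : ℤ) (x : ℤ → ℝ) : ℤ → ℝ := fun n => x (n + k)

/-- The metric `d̂(x̂,ŷ) = sup{2^n d(x_n,y_n) : n ≤ 0}` on `M̂`. -/
def dhat (x y : ℤ → ℝ) : ℝ :=
  sSup {t : ℝ | ∃ n : ℤ, n ≤ 0 ∧ t = (2:ℝ) ^ n * |x n - y n|}

/-- The invertible derivative cocycle `d̂f^{(n)}` over `f̂`. -/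
def dfhat (f : ℝ → ℝ) (x : ℤ → ℝ) (n : ℤ) : ℝ :=
  if 0 ≤ n then ∏ j ∈ Finset.range n.toNat, deriv f (x (j : ℤ))
  else (∏ j ∈ Finset.range (-n).toNat, deriv f (x (-(j : ℤ) - 1)))⁻¹

/-- The Pesin parameter `u(x̂)`. -/
def uPes (f : ℝ → ℝ) (χ : ℝ) (x : ℤ → ℝ) : ℝ :=
  Real.sqrt (∑' n : ℕ, Real.exp (2 * (n:ℝ) * χ) * (dfhat f x (-(n:ℤ))) ^ 2)

/-- The Pesin chart `Ψ_{x̂}(t) = t/u(x̂) + x₀`. -/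
def Psi (f : ℝ → ℝ) (χ : ℝ) (x : ℤ → ℝ) (t : ℝ) : ℝ := t / uPes f χ x + x 0

/-- The set `NUE_χ`. -/
def NUE (F : GoodMap) (χ : ℝ) : Set (ℤ → ℝ) :=
  {x | inMhat F.f x ∧ (∀ n, x n ∉ F.S) ∧
    (∃ l > χ, Tendsto (fun n : ℕ => Real.log |dfhat F.f x (n:ℤ)| / (n:ℝ)) atTop (𝓝 l)) ∧
    (∃ l > χ, Tendsto (fun n : ℕ => Real.log |dfhat F.f x (-(n:ℤ))| / (-(n:ℝ))) atTop (𝓝 l))}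

/-- `ρ(x̂) = d({x₋₁,x₀,x₁}, S)`. -/
def rho (F : GoodMap) (x : ℤ → ℝ) : ℝ :=
  min (F.dS (x (-1))) (min (F.dS (x 0)) (F.dS (x 1)))

/-- `I_ε = {e^{-εn/3} : n ≥ 0}`. -/
def Ieps (ε : ℝ) : Set ℝ := {q | ∃ n : ℕ, q = Real.exp (-(ε * n) / 3)}

/-- `Q̃_ε(x̂)`. -/
def Qtilde (F : GoodMap) (χ ε : ℝ) (x : ℤ → ℝ) : ℝ :=
  ε ^ (3 / F.β) *
    min (uPes F.f χ x ^ (-(24 / F.β)))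
      (uPes F.f χ (fhatI (-1) x) ^ (-(12 / F.β)) * rho F x ^ (72 * F.a / F.β))

/-- `Q_ε(x̂) = max{q ∈ I_ε : q ≤ Q̃_ε(x̂)}`. -/
def Qeps (F : GoodMap) (χ ε : ℝ) (x : ℤ → ℝ) : ℝ :=
  sSup {q | q ∈ Ieps ε ∧ q ≤ Qtilde F χ ε x}

/-- The regular set. -/
def Reg (F : GoodMap) : Set (ℤ → ℝ) :=
  {x | inMhat F.f x ∧ (∀ n, x n ∉ F.S) ∧
    Tendsto (fun n : ℕ => Real.log (F.dS (x (n:ℤ))) / (n:ℝ)) atTop (𝓝 0) ∧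
    Tendsto (fun n : ℕ => Real.log (F.dS (x (-(n:ℤ)))) / (n:ℝ)) atTop (𝓝 0)}

/-- The set `NUE*_χ`. -/
def NUEstar (F : GoodMap) (χ : ℝ) : Set (ℤ → ℝ) :=
  {x | x ∈ NUE F χ ∧ x ∈ Reg F ∧
    (∃ nk : ℕ → ℤ, Tendsto nk atTop atBot ∧
      Tendsto (fun k => uPes F.f χ (fhatI (nk k) x)) atTop (𝓝 (uPes F.f χ x))) ∧
    Tendsto (fun n : ℕ => Real.log (uPes F.f χ (fhatI (-(n:ℤ)) x)) / (-(n:ℝ))) atTop (𝓝 0)}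

/-- An ε-chart is a pair `(x̂, p)`, representing `Ψ_{x̂}` restricted to `[-p,p]`. -/
structure Chart where
  x : ℤ → ℝ
  p : ℝ

/-- `(x̂, p)` is a genuine ε-chart. -/
def IsChart (F : GoodMap) (χ ε : ℝ) (c : Chart) : Prop :=
  c.x ∈ NUE F χ ∧ 0 < c.p ∧ c.p ≤ Qeps F χ ε c.x

/-- ε-overlap of two ε-charts. -/
def Overlap (F : GoodMap) (χ ε : ℝ) (c₁ c₂ : Chart) : Prop :=
  Real.exp (-ε) ≤ c₁.p / c₂.p ∧ c₁.p / c₂.p ≤ Real.exp ε ∧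
  |c₁.x 0 - c₂.x 0| + |(uPes F.f χ c₁.x)⁻¹ - (uPes F.f χ c₂.x)⁻¹| < (c₁.p * c₂.p) ^ 4

/-- `g_{x̂} = g_{x₋₁}`, the inverse branch of `f` taking `x₀` to `x₋₁`. -/
def ghat (F : GoodMap) (x : ℤ → ℝ) : ℝ → ℝ := F.g (x (-1))

/-- `G_{x̂} = Ψ_{f̂⁻¹x̂}⁻¹ ∘ g_{x̂} ∘ Ψ_{x̂}`. -/
def Gmap (F : GoodMap) (χ : ℝ) (x : ℤ → ℝ) (t : ℝ) : ℝ :=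
  uPes F.f χ (fhatI (-1) x) * (ghat F x (Psi F.f χ x t) - x (-1))

/-- `G_{x̂,ŷ} = Ψ_{ŷ}⁻¹ ∘ g_{x̂} ∘ Ψ_{x̂}`. -/
def Gmap2 (F : GoodMap) (χ : ℝ) (x y : ℤ → ℝ) (t : ℝ) : ℝ :=
  uPes F.f χ y * (ghat F x (Psi F.f χ x t) - y 0)

/-- `F_{x̂} = Ψ_{f̂x̂}⁻¹ ∘ f ∘ Ψ_{x̂}`. -/
def Fmap (F : GoodMap) (χ : ℝ) (x : ℤ → ℝ) (t : ℝ) : ℝ :=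
  uPes F.f χ (fhat x) * (F.f (Psi F.f χ x t) - x 1)

/-- `δ_ε = e^{-εn}` where `n` is the unique positive integer with `e^{-εn} < ε ≤ e^{-ε(n-1)}`. -/
def deltaEps (ε : ℝ) : ℝ :=
  Real.exp (-(ε * ((⌊Real.log (1 / ε) / ε⌋ + 1 : ℤ) : ℝ)))

/-- Weak edge `v ⤎ w` (from `w = Ψ_{x̂}^p` to `v = Ψ_{ŷ}^q`). -/
def WeakEdge (F : GoodMap) (χ ε : ℝ) (v w : Chart) : Prop :=
  IsChart F χ ε v ∧ IsChart F χ ε w ∧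
  Overlap F χ ε ⟨fhatI (-1) w.x, v.p⟩ v ∧
  w.p ≤ Real.exp ε * v.p

/-- Edge `v ← w` (from `w = Ψ_{x̂}^p` to `v = Ψ_{ŷ}^q`). -/
def Edge (F : GoodMap) (χ ε : ℝ) (v w : Chart) : Prop :=
  IsChart F χ ε v ∧ IsChart F χ ε w ∧
  Overlap F χ ε ⟨fhatI (-1) w.x, v.p⟩ v ∧
  |v.x 1 - w.x 0| < v.p ∧
  Real.exp (-v.p) ≤ uPes F.f χ (fhat v.x) / uPes F.f χ w.x ∧
  uPes F.f χ (fhat v.x) / uPes F.f χ w.x ≤ Real.exp v.p ∧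
  w.p = min (Real.exp ε * v.p) (deltaEps ε * Qeps F χ ε w.x)

/-- ε-generalized pseudo-orbit. -/
def IsGPO (F : GoodMap) (χ ε : ℝ) (v : ℤ → Chart) : Prop :=
  ∀ n : ℤ, Edge F χ ε (v n) (v (n + 1))

/-- weak ε-generalized pseudo-orbit. -/
def IsWeakGPO (F : GoodMap) (χ ε : ℝ) (v : ℤ → Chart) : Prop :=
  ∀ n : ℤ, WeakEdge F χ ε (v n) (v (n + 1))

/-- The range `Ψ_{x̂}([-p,p])` of an ε-chart. -/
def chartRange (F : GoodMap) (χ : ℝ) (c : Chart) : Set ℝ :=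
  Psi F.f χ c.x '' Set.Icc (-c.p) c.p

/-- A bi-infinite sequence of ε-charts shadows `x̂ ∈ M̂`. -/
def Shadows (F : GoodMap) (χ : ℝ) (v : ℤ → Chart) (x : ℤ → ℝ) : Prop :=
  inMhat F.f x ∧ ∀ n : ℤ, x n ∈ chartRange F χ (v n)

/-- `q_ε(x̂) = δ_ε inf{e^{ε|m|} Q_ε(f̂^m x̂) : m ≤ 0}`. -/
def qeps (F : GoodMap) (χ ε : ℝ) (x : ℤ → ℝ) : ℝ :=
  deltaEps ε *
    sInf {t : ℝ | ∃ m : ℤ, m ≤ 0 ∧ t = Real.exp (ε * |(m:ℝ)|) * Qeps F χ ε (fhatI m x)}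

/-- Recurrence: some symbol repeats infinitely often in the future and some in the past. -/
def Recurrent {V : Type*} (v : ℤ → V) : Prop :=
  (∃ c, {n : ℤ | 0 < n ∧ v n = c}.Infinite) ∧ ∃ c, {n : ℤ | n < 0 ∧ v n = c}.Infinite

/-- The distance `d(v,w) = exp(-min{|n| : v_n ≠ w_n})` on sequence spaces. -/
def dSigma {V : Type*} (v w : ℤ → V) : ℝ :=
  sSup {t : ℝ | ∃ n : ℤ, v n ≠ w n ∧ t = Real.exp (-|(n:ℝ)|)}

/-- Sup norm over a set. -/
def supNorm (h : ℝ → ℝ) (I : Set ℝ) : ℝ := sSup ((fun t => |h t|) '' I)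

/-- Hölder constant over a set. -/
def holConst (γ : ℝ) (h : ℝ → ℝ) (I : Set ℝ) : ℝ :=
  sSup {r : ℝ | ∃ t ∈ I, ∃ s ∈ I, t ≠ s ∧ r = |h t - h s| / |t - s| ^ γ}

section Birkhoff

variable {Ω : Type*} [MeasurableSpace Ω]

/-- Running maxima of Birkhoff sums, defined recursively. -/
def maxB (T : Ω → Ω) (ψ : Ω → ℝ) : ℕ → Ω → ℝ
  | 0 => ψ
  | (n+1) => fun x => ψ x + max 0 (maxB T ψ n (T x))

lemma maxB_succ (T : Ω → Ω) (ψ : Ω → ℝ) (n : ℕ) (x : Ω) :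
    maxB T ψ (n+1) x = ψ x + max 0 (maxB T ψ n (T x)) := rfl

lemma maxB_measurable {T : Ω → Ω} {ψ : Ω → ℝ} (hT : Measurable T) (hψ : Measurable ψ) (n : ℕ) :
    Measurable (maxB T ψ n) := by
  induction n with
  | zero => exact hψ
  | succ n ih => exact hψ.add (measurable_const.max (ih.comp hT))

lemma maxB_integrable {ν : Measure Ω} {T : Ω → Ω} {ψ : Ω → ℝ}
    (hT : MeasurePreserving T ν ν) (hψi : Integrable ψ ν) (n : ℕ) :
    Integrable (maxB T ψ n) ν := by
  induction n with
  | zero => exact hψi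
  | succ n ih =>
    have h1 : Integrable (fun x => maxB T ψ n (T x)) ν := hT.integrable_comp_of_integrable ih
    have h2 : Integrable (fun x => max 0 (maxB T ψ n (T x))) ν := by
      simpa [max_comm] using h1.pos_part
    exact hψi.add h2

lemma maxB_mono (T : Ω → Ω) (ψ : Ω → ℝ) (n : ℕ) (x : Ω) :
    maxB T ψ n x ≤ maxB T ψ (n+1) x := by
  induction n generalizing x with
  | zero => rw [maxB_succ]; simp [maxB]
  | succ n ih =>
    rw [maxB_succ, maxB_succ T ψ (n+1)]
    have := ih (T x)
    gcongr

lemma maxB_monotone (T : Ω → Ω) (ψ : Ω → ℝ) (x : Ω) : Monotone (fun n => maxB T ψ n x) :=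
  monotone_nat_of_le_succ fun n => maxB_mono T ψ n x

lemma birkhoffSum_le_maxB (T : Ω → Ω) (ψ : Ω → ℝ) (n : ℕ) (x : Ω) :
    birkhoffSum T ψ (n+1) x ≤ maxB T ψ n x := by
  induction n generalizing x with
  | zero => simp [maxB]
  | succ n ih =>
    rw [birkhoffSum_succ', maxB_succ]
    have := ih (T x)
    have h2 := le_max_right 0 (maxB T ψ n (T x))
    linarith

lemma tendsto_maxB_iff (T : Ω → Ω) (ψ : Ω → ℝ) (x : Ω) :
    BddAbove (range fun n => maxB T ψ n (T x)) ↔ BddAbove (range fun n => maxB T ψ n x) := by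
  constructor
  · rintro ⟨C, hC⟩
    refine ⟨ψ x + max 0 C, ?_⟩
    rintro _ ⟨n, rfl⟩
    refine (maxB_mono T ψ n x).trans ?_
    rw [maxB_succ]
    have := hC ⟨n, rfl⟩
    simp only at this
    gcongr
  · rintro ⟨C, hC⟩
    refine ⟨C - ψ x, ?_⟩
    rintro _ ⟨n, rfl⟩
    have := hC ⟨n+1, rfl⟩
    simp only [maxB_succ] at this
    have h2 := le_max_right 0 (maxB T ψ n (T x))
    simp only
    linarith

lemma measurableSet_unbdd {T : Ω → Ω} {ψ : Ω → ℝ} (hT : Measurable T) (hψ : Measurable ψ) :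
    MeasurableSet {x | ¬ BddAbove (range fun n => maxB T ψ n x)} :=
  (measurableSet_bddAbove_range (fun n => maxB_measurable hT hψ n)).compl

lemma integral_nonneg_unbdd {ν : Measure Ω} [IsFiniteMeasure ν] {T : Ω → Ω} {ψ : Ω → ℝ}
    (hT : MeasurePreserving T ν ν) (hψi : Integrable ψ ν)
    (hA : ∀ᵐ x ∂ν, ¬ BddAbove (range fun n => maxB T ψ n x)) : 0 ≤ ∫ x, ψ x ∂ν := by
  have hcomp : ∀ n, Integrable (fun x => maxB T ψ n (T x)) ν := fun n =>
    hT.integrable_comp_of_integrable (maxB_integrable hT hψi n)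
  have hcompψ : Integrable (fun x => ψ (T x)) ν := hT.integrable_comp_of_integrable hψi
  have hlim : Tendsto (fun n => ∫ x, (maxB T ψ (n+1) x - maxB T ψ n (T x)) ∂ν) atTop
      (𝓝 (∫ x, ψ x ∂ν)) := by
    refine tendsto_integral_of_dominated_convergence (fun x => |ψ x| + |ψ (T x)|) ?_ ?_ ?_ ?_
    · exact fun n => ((maxB_integrable hT hψi (n+1)).sub (hcomp n)).aestronglyMeasurable
    · exact hψi.abs.add hcompψ.abs
    · intro n
      refine Eventually.of_forall fun x => ?_
      rw [maxB_succ, Real.norm_eq_abs]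
      have h0 : ψ (T x) ≤ maxB T ψ n (T x) := maxB_monotone T ψ (T x) (Nat.zero_le n)
      rcases le_total 0 (maxB T ψ n (T x)) with h | h
      · rw [max_eq_right h]; simp
      · rw [max_eq_left h]
        have h3 : |ψ (T x)| = - ψ (T x) := abs_of_nonpos (h0.trans h)
        have h4 := abs_add_le (ψ x) (- maxB T ψ n (T x))
        rw [abs_neg, abs_of_nonpos h] at h4
        rw [h3]
        have : ψ x + 0 - maxB T ψ n (T x) = ψ x + - maxB T ψ n (T x) := by ring
        rw [this]; linarith
    · filter_upwards [hA] with x hx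
      rw [← tendsto_maxB_iff] at hx
      have ht := tendsto_atTop_of_monotone (maxB_monotone T ψ (T x)) |>.resolve_right (by
        rintro ⟨l, hl⟩
        exact hx hl.bddAbove_range)
      refine tendsto_const_nhds.congr' ?_
      filter_upwards [ht.eventually_ge_atTop 0] with n hn
      rw [maxB_succ, max_eq_right hn]; ring
  refine ge_of_tendsto' hlim fun n => ?_
  rw [integral_sub (maxB_integrable hT hψi (n+1)) (hcomp n)]
  have h1 : ∫ x, maxB T ψ n (T x) ∂ν = ∫ x, maxB T ψ n x ∂ν := by
    conv_rhs => rw [← hT.map_eq]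
    rw [integral_map hT.measurable.aemeasurable]
    rw [hT.map_eq]; exact (maxB_integrable hT hψi n).aestronglyMeasurable
  rw [h1, sub_nonneg]
  exact integral_mono (maxB_integrable hT hψi n) (maxB_integrable hT hψi (n+1))
    fun x => maxB_mono T ψ n x

lemma ae_bddAbove_maxB {ν : Measure Ω} [IsFiniteMeasure ν] {T : Ω → Ω} {g : Ω → ℝ}
    (hT : MeasurePreserving T ν ν) (hg : Measurable g) (hgi : Integrable g ν)
    (h0 : ∀ A, MeasurableSet A → T ⁻¹' A = A → ∫ x in A, g x ∂ν = 0) {ε : ℝ} (hε : 0 < ε) :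
    ∀ᵐ x ∂ν, BddAbove (range fun n => maxB T (fun y => g y - ε) n x) := by
  set ψ : Ω → ℝ := fun y => g y - ε with hψdef
  have hψ : Measurable ψ := hg.sub_const ε
  have hψi : Integrable ψ ν := hgi.sub (integrable_const ε)
  set A := {x | ¬ BddAbove (range fun n => maxB T ψ n x)} with hAdef
  have hAm : MeasurableSet A := measurableSet_unbdd hT.measurable hψ
  have hAinv : T ⁻¹' A = A := by
    ext x
    simp only [hAdef, mem_preimage, mem_ofPred_eq, tendsto_maxB_iff]
  have hTA : MeasurePreserving T (ν.restrict A) (ν.restrict A) := by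
    have := hT.restrict_preimage hAm
    rwa [hAinv] at this
  have h1 := integral_nonneg_unbdd hTA hψi.integrableOn (ae_restrict_mem hAm)
  have h2 : ∫ x in A, ψ x ∂ν = - (ν.real A * ε) := by
    rw [hψdef, integral_sub hgi.integrableOn (integrable_const ε), h0 A hAm hAinv]
    simp
  have h3 : ν.real A = 0 := by
    have : 0 ≤ ν.real A := measureReal_nonneg
    rw [h2] at h1
    nlinarith
  have h4 : ν A = 0 := by
    rwa [measureReal_eq_zero_iff] at h3
  rw [measure_eq_zero_iff_ae_notMem] at h4
  filter_upwards [h4] with x hx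
  simpa [hAdef] using hx

lemma ae_birkhoff_upper {ν : Measure Ω} [IsFiniteMeasure ν] {T : Ω → Ω} {g : Ω → ℝ}
    (hT : MeasurePreserving T ν ν) (hg : Measurable g) (hgi : Integrable g ν)
    (h0 : ∀ A, MeasurableSet A → T ⁻¹' A = A → ∫ x in A, g x ∂ν = 0) :
    ∀ᵐ x ∂ν, ∀ ε : ℝ, 0 < ε → ∀ᶠ n : ℕ in atTop, birkhoffSum T g n x ≤ n * ε := by
  have hall : ∀ᵐ x ∂ν, ∀ m : ℕ,
      BddAbove (range fun n => maxB T (fun y => g y - 1 / ((m:ℝ) + 1)) n x) :=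
    ae_all_iff.2 fun m => ae_bddAbove_maxB hT hg hgi h0 (by positivity)
  filter_upwards [hall] with x hx ε hε
  obtain ⟨m, hm⟩ := exists_nat_one_div_lt hε
  obtain ⟨C, hC⟩ := hx m
  have hlt : 0 < ε - 1 / ((m:ℝ)+1) := by linarith
  obtain ⟨N, hN⟩ := exists_nat_ge (C / (ε - 1 / ((m:ℝ)+1)))
  filter_upwards [eventually_ge_atTop (N+1)] with n hn
  obtain ⟨k, rfl⟩ : ∃ k, n = k + 1 := ⟨n - 1, by omega⟩
  have h1 := birkhoffSum_le_maxB T (fun y => g y - 1 / ((m:ℝ) + 1)) k x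
  have h2 := hC ⟨k, rfl⟩
  simp only at h2
  have h3 : birkhoffSum T (fun y => g y - 1 / ((m:ℝ) + 1)) (k+1) x
      = birkhoffSum T g (k+1) x - ((k+1 : ℕ):ℝ) * (1 / ((m:ℝ)+1)) := by
    simp [birkhoffSum, Finset.sum_sub_distrib]
  have h4 : C ≤ ((k+1 : ℕ):ℝ) * (ε - 1 / ((m:ℝ)+1)) := by
    rw [div_le_iff₀ hlt] at hN
    have : (N:ℝ) ≤ ((k+1:ℕ):ℝ) := by exact_mod_cast (by omega)
    nlinarith
  rw [h3] at h1
  linarith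

/-- The pointwise ergodic theorem of Birkhoff. -/
theorem birkhoff_ae {ν : Measure Ω} [IsFiniteMeasure ν] {T : Ω → Ω} {φ : Ω → ℝ}
    (hT : MeasurePreserving T ν ν) (hφ : Measurable φ) (hφi : Integrable φ ν) :
    ∀ᵐ x ∂ν, Tendsto (fun n : ℕ => birkhoffSum T φ n x / (n:ℝ)) atTop
      (𝓝 ((ν[φ | MeasurableSpace.invariants T]) x)) := by
  set e : Ω → ℝ := ν[φ | MeasurableSpace.invariants T] with he
  have hle := MeasurableSpace.invariants_le T
  have hem' : Measurable[MeasurableSpace.invariants T] e := stronglyMeasurable_condExp.measurable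
  have hem : Measurable e := hem'.mono hle le_rfl
  have hei : Integrable e ν := integrable_condExp
  have heT : e ∘ T = e := MeasurableSpace.comp_eq_of_measurable_invariants hem'
  have h0 : ∀ A, MeasurableSet A → T ⁻¹' A = A → ∫ x in A, (φ x - e x) ∂ν = 0 := by
    intro A hA hAT
    rw [integral_sub hφi.integrableOn hei.integrableOn, he,
      setIntegral_condExp hle hφi (MeasurableSpace.measurableSet_invariants.2 ⟨hA, hAT⟩), sub_self]
  have hup := ae_birkhoff_upper hT (hφ.sub hem) (hφi.sub hei) h0
  have hlo := ae_birkhoff_upper hT (hem.sub hφ) (hei.sub hφi) (by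
    intro A hA hAT
    have h1 := h0 A hA hAT
    rw [integral_sub hφi.integrableOn hei.integrableOn] at h1
    have h2 : ∫ x in A, (e x - φ x) ∂ν = _ := integral_sub hei.integrableOn hφi.integrableOn
    simp only [Pi.sub_apply]
    linarith)
  filter_upwards [hup, hlo] with x h1 h2
  have hsum : ∀ n : ℕ, birkhoffSum T e n x = n * e x := by
    intro n
    rw [birkhoffSum_of_comp_eq heT]; simp
  rw [Metric.tendsto_atTop']
  intro ε hε
  have hA := (h1 (ε/2) (by positivity)).and (h2 (ε/2) (by positivity))
  obtain ⟨N, hN⟩ := eventually_atTop.1 hA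
  refine ⟨N, fun n hn => ?_⟩
  obtain ⟨ha, hb⟩ := hN n hn.le
  have hn0 : (0:ℝ) < n := by exact_mod_cast (by omega)
  rw [birkhoffSum_sub, hsum] at ha hb
  rw [Real.dist_eq, abs_lt]
  have : birkhoffSum T φ n x / n - e x = (birkhoffSum T φ n x - n * e x) / n := by
    field_simp
  rw [this, lt_div_iff₀ hn0, div_lt_iff₀ hn0]
  constructor <;> nlinarith

/-- Sublinear growth of an integrable observable along orbits. -/
theorem orbit_div_tendsto_zero {ν : Measure Ω} [IsFiniteMeasure ν] {T : Ω → Ω} {φ : Ω → ℝ}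
    (hT : MeasurePreserving T ν ν) (hφ : Measurable φ) (hφi : Integrable φ ν) :
    ∀ᵐ x ∂ν, Tendsto (fun n : ℕ => φ (T^[n] x) / (n:ℝ)) atTop (𝓝 0) := by
  filter_upwards [birkhoff_ae hT hφ hφi] with x hx
  have h1 := hx.comp (tendsto_add_atTop_nat 1)
  have h2 : Tendsto (fun n : ℕ => ((n:ℝ)+1) / n) atTop (𝓝 1) := by
    have : Tendsto (fun n : ℕ => 1 + (n:ℝ)⁻¹) atTop (𝓝 (1 + 0)) :=
      tendsto_const_nhds.add tendsto_inv_atTop_nhds_zero_nat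
    rw [add_zero] at this
    refine this.congr' ?_
    filter_upwards [eventually_gt_atTop 0] with n hn
    have : (n:ℝ) ≠ 0 := by positivity
    field_simp
  have h3 := (h1.mul h2).sub hx
  rw [mul_one, sub_self] at h3
  refine h3.congr' ?_
  filter_upwards [eventually_gt_atTop 0] with n hn
  have : (n:ℝ) ≠ 0 := by positivity
  have h' : (n:ℝ) + 1 ≠ 0 := by positivity
  simp only [Function.comp_apply, birkhoffSum_succ, Nat.cast_add, Nat.cast_one]
  field_simp
  ring

/-- Recurrence of a measurable observable. -/
theorem recur_ae {ν : Measure Ω} [IsFiniteMeasure ν] {T : Ω → Ω} {u : Ω → ℝ}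
    (hT : MeasurePreserving T ν ν) (hu : Measurable u) :
    ∀ᵐ x ∂ν, ∃ k : ℕ → ℕ, StrictMono k ∧ Tendsto (fun i => u (T^[k i] x)) atTop (𝓝 (u x)) := by
  have : ∀ s ∈ TopologicalSpace.countableBasis ℝ,
      ∀ᵐ x ∂ν, x ∈ u ⁻¹' s → ∃ᶠ n in atTop, T^[n] x ∈ u ⁻¹' s := fun s hs =>
    hT.conservative.ae_mem_imp_frequently_image_mem
      (hu (TopologicalSpace.isOpen_of_mem_countableBasis hs).measurableSet).nullMeasurableSet
  filter_upwards [(ae_ball_iff <| TopologicalSpace.countable_countableBasis ℝ).2 this] with x hx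
  have hc : MapClusterPt (u x) atTop (fun n => u (T^[n] x)) := by
    rw [mapClusterPt_iff_frequently]
    intro s hs
    rcases (TopologicalSpace.isBasis_countableBasis ℝ).mem_nhds_iff.1 hs with ⟨o, hoS, hxo, hos⟩
    exact (hx o hoS hxo).mono fun n hn => hos hn
  exact hc.tendsto_subseq

end Birkhoff

lemma dfhat_nat (f : ℝ → ℝ) (x : ℤ → ℝ) (n : ℕ) :
    dfhat f x (n:ℤ) = ∏ j ∈ Finset.range n, deriv f (x (j:ℤ)) := by
  simp [dfhat]

lemma dfhat_neg_nat (f : ℝ → ℝ) (x : ℤ → ℝ) (n : ℕ) :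
    dfhat f x (-(n:ℤ)) = (∏ j ∈ Finset.range n, deriv f (x (-(j:ℤ) - 1)))⁻¹ := by
  rcases Nat.eq_zero_or_pos n with rfl | hn
  · simp [dfhat]
  · have : ¬ (0 ≤ -(n:ℤ)) := by omega
    have h2 : (-(-(n:ℤ))).toNat = n := by simp
    rw [dfhat, if_neg this, h2]

lemma exponent_bound {B : ℕ → ℝ} {l χ : ℝ} (hl : χ < l)
    (hB : Tendsto (fun n : ℕ => B n / (n:ℝ)) atTop (𝓝 l)) {ε : ℝ} (hε : 0 < ε) :
    ∀ᶠ n : ℕ in atTop, ∀ k : ℕ,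
      2 * (k:ℝ) * χ - 2 * (B (n+k) - B n) ≤ 4 * ε * n + k * (-(l - χ)) := by
  set δ := min ε ((l - χ)/2) with hδ
  have hδ0 : 0 < δ := lt_min hε (by linarith)
  have hδ1 : δ ≤ ε := min_le_left _ _
  have hδ2 : δ ≤ (l - χ)/2 := min_le_right _ _
  obtain ⟨N, hN⟩ := Metric.tendsto_atTop.1 hB δ hδ0
  have key : ∀ m : ℕ, N ≤ m → 0 < m → |B m - l * m| ≤ δ * m := by
    intro m hm hm0
    have h := (hN m hm).le
    have hm0' : (0:ℝ) < m := by exact_mod_cast hm0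
    rw [Real.dist_eq] at h
    have e : B m / m - l = (B m - l * m) / m := by field_simp
    rw [e, abs_div, abs_of_pos hm0', div_le_iff₀ hm0'] at h
    exact h
  filter_upwards [eventually_ge_atTop (N+1)] with n hn k
  have h1 := abs_le.1 (key n (by omega) (by omega))
  have h2 := abs_le.1 (key (n+k) (by omega) (by omega))
  push_cast at h2
  have hn0 : (0:ℝ) ≤ n := by positivity
  have hk0 : (0:ℝ) ≤ k := by positivity
  nlinarith [mul_le_mul_of_nonneg_right hδ1 hn0, mul_le_mul_of_nonneg_right hδ2 hk0]

lemma temper_aux {B : ℕ → ℝ} {l χ : ℝ} (hl : χ < l)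
    (hB : Tendsto (fun n : ℕ => B n / (n:ℝ)) atTop (𝓝 l)) :
    Tendsto (fun n : ℕ => Real.log (Real.sqrt
      (∑' k : ℕ, Real.exp (2 * (k:ℝ) * χ - 2 * (B (n+k) - B n)))) / (-(n:ℝ))) atTop (𝓝 0) := by
  set r := Real.exp (-(l - χ)) with hr
  have hr0 : 0 ≤ r := (Real.exp_pos _).le
  have hr1 : r < 1 := by rw [hr, Real.exp_lt_one_iff]; linarith
  have hC : 0 < (1 - r)⁻¹ := inv_pos.2 (by linarith)
  have bound : ∀ ε : ℝ, 0 < ε → ∀ᶠ n : ℕ in atTop,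
      0 ≤ Real.log (∑' k : ℕ, Real.exp (2 * (k:ℝ) * χ - 2 * (B (n+k) - B n))) ∧
      Real.log (∑' k : ℕ, Real.exp (2 * (k:ℝ) * χ - 2 * (B (n+k) - B n)))
        ≤ 4 * ε * n + Real.log (1 - r)⁻¹ := by
    intro ε hε
    filter_upwards [exponent_bound hl hB hε] with n hn
    have hle : ∀ k : ℕ, Real.exp (2 * (k:ℝ) * χ - 2 * (B (n+k) - B n))
        ≤ Real.exp (4 * ε * n) * r ^ k := by
      intro k
      rw [hr, ← Real.exp_nat_mul, ← Real.exp_add]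
      exact Real.exp_le_exp.2 (hn k)
    have hsg : Summable (fun k : ℕ => Real.exp (4 * ε * n) * r ^ k) :=
      (summable_geometric_of_lt_one hr0 hr1).mul_left _
    have hs : Summable (fun k : ℕ => Real.exp (2 * (k:ℝ) * χ - 2 * (B (n+k) - B n))) :=
      Summable.of_nonneg_of_le (fun k => (Real.exp_pos _).le) hle hsg
    have h1 : 1 ≤ ∑' k : ℕ, Real.exp (2 * (k:ℝ) * χ - 2 * (B (n+k) - B n)) := by
      have := hs.le_tsum 0 (fun k _ => (Real.exp_pos _).le)
      simpa using this
    have h2 := hs.tsum_le_tsum hle hsg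
    rw [tsum_mul_left, tsum_geometric_of_lt_one hr0 hr1] at h2
    refine ⟨Real.log_nonneg h1, ?_⟩
    refine (Real.log_le_log (by linarith) h2).trans ?_
    rw [Real.log_mul (Real.exp_pos _).ne' hC.ne', Real.log_exp]
  rw [Metric.tendsto_atTop']
  intro ε hε
  have hlim : Tendsto (fun n : ℕ => Real.log (1 - r)⁻¹ / (n:ℝ)) atTop (𝓝 0) :=
    tendsto_const_div_atTop_nhds_zero_nat _
  obtain ⟨N, hN⟩ := eventually_atTop.1 ((bound (ε/4) (by positivity)).and
    (hlim.eventually_lt_const hε))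
  refine ⟨N, fun n hn => ?_⟩
  obtain ⟨⟨ha, hb⟩, hc⟩ := hN n hn.le
  have hn0 : (0:ℝ) < n := by exact_mod_cast (by omega)
  rw [Real.log_sqrt (tsum_nonneg fun k => (Real.exp_pos _).le)]
  rw [Real.dist_eq, sub_zero, abs_div, abs_neg, abs_of_pos hn0, abs_of_nonneg (by linarith),
    div_lt_iff₀ hn0]
  rw [div_lt_iff₀ hn0] at hc
  linarith

lemma uPes_shift_eq (f : ℝ → ℝ) (χ : ℝ) (x : ℤ → ℝ) (hx : ∀ n, deriv f (x n) ≠ 0) (n : ℕ) :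
    uPes f χ (fhatI (-(n:ℤ)) x) = Real.sqrt (∑' k : ℕ, Real.exp (2 * (k:ℝ) * χ -
      2 * (Real.log |∏ j ∈ Finset.range (n+k), deriv f (x (-(j:ℤ) - 1))| -
        Real.log |∏ j ∈ Finset.range n, deriv f (x (-(j:ℤ) - 1))|))) := by
  unfold uPes
  congr 1
  refine tsum_congr fun k => ?_
  have hp : ∀ m, ∏ j ∈ Finset.range m, deriv f (x (-(j:ℤ) - 1)) ≠ 0 := fun m =>
    Finset.prod_ne_zero_iff.2 fun j _ => hx _
  have hq : ∏ j ∈ Finset.range k, deriv f (x (-((n+j : ℕ):ℤ) - 1)) ≠ 0 :=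
    Finset.prod_ne_zero_iff.2 fun j _ => hx _
  rw [dfhat_neg_nat, Finset.prod_range_add, abs_mul,
    Real.log_mul (abs_ne_zero.2 (hp n)) (abs_ne_zero.2 hq), add_sub_cancel_left,
    Real.exp_sub, div_eq_mul_inv, mul_comm 2 (Real.log _), ← Real.rpow_def_of_pos (abs_pos.2 hq)]
  congr 1
  rw [inv_pow]
  congr 1
  have e : ∀ j : ℕ, fhatI (-(n:ℤ)) x (-(j:ℤ) - 1) = x (-((n+j : ℕ):ℤ) - 1) := by
    intro j; unfold fhatI; congr 1; push_cast; ring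
  simp only [e]
  rw [Real.rpow_two, sq_abs]

lemma temper (f : ℝ → ℝ) {χ l : ℝ} (x : ℤ → ℝ) (hx : ∀ n, deriv f (x n) ≠ 0) (hl : χ < l)
    (hB : Tendsto (fun n : ℕ =>
      Real.log |∏ j ∈ Finset.range n, deriv f (x (-(j:ℤ) - 1))| / (n:ℝ)) atTop (𝓝 l)) :
    Tendsto (fun n : ℕ => Real.log (uPes f χ (fhatI (-(n:ℤ)) x)) / (-(n:ℝ))) atTop (𝓝 0) := by
  refine (temper_aux hl hB).congr fun n => ?_
  rw [uPes_shift_eq f χ x hx]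

lemma fhat_iter (x : ℤ → ℝ) (n : ℕ) : fhat^[n] x = fhatI (n:ℤ) x := by
  induction n with
  | zero => funext m; simp [fhatI]
  | succ n ih =>
    rw [Function.iterate_succ_apply', ih]; funext m; simp only [fhat, fhatI]; congr 1
    push_cast; ring

lemma fhatI_neg_iter (x : ℤ → ℝ) (n : ℕ) : (fhatI (-1))^[n] x = fhatI (-(n:ℤ)) x := by
  induction n with
  | zero => funext m; simp [fhatI]
  | succ n ih =>
    rw [Function.iterate_succ_apply', ih]; funext m; simp only [fhatI]; congr 1
    push_cast; ring

lemma measurable_fhatI (k : ℤ) : Measurable (fhatI k) :=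
  measurable_pi_lambda _ fun n => measurable_pi_apply (n + k)

lemma measurable_fhat : Measurable fhat :=
  measurable_pi_lambda _ fun n => measurable_pi_apply (n + 1)

lemma measurable_uPes (f : ℝ → ℝ) (χ : ℝ) : Measurable (uPes f χ) := by
  unfold uPes
  refine Measurable.sqrt (Measurable.tsum fun n => ?_)
  simp only [dfhat_neg_nat]
  refine Measurable.const_mul (Measurable.pow_const (Measurable.inv ?_) 2) _
  exact Finset.measurable_fun_prod _ fun j _ =>
    (measurable_deriv f).comp (measurable_pi_apply _)

lemma invariants_eq : MeasurableSpace.invariants (fhatI (-1)) = MeasurableSpace.invariants fhat := by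
  have h1 : ∀ x, fhat (fhatI (-1) x) = x := fun x => by
    funext m; simp only [fhat, fhatI]; congr 1; ring
  have h2 : ∀ x, fhatI (-1) (fhat x) = x := fun x => by
    funext m; simp only [fhat, fhatI]; congr 1; ring
  ext s
  rw [MeasurableSpace.measurableSet_invariants, MeasurableSpace.measurableSet_invariants]
  refine and_congr_right fun _ => ⟨fun h => ?_, fun h => ?_⟩
  · conv_lhs => rw [← h]
    ext x; simp [h2]
  · conv_lhs => rw [← h]
    ext x; simp [h1]

/-- At good points the distance to `S` is positive and the logarithmic derivative is controlled. -/
lemma good_point (F : GoodMap) (hA : F.SatA) {x : ℝ} (hx : x ∈ Mset) (hxS : x ∉ F.S)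
    (hfx : F.f x ∉ F.S) :
    deriv F.f x ≠ 0 ∧ |Real.log (|deriv F.f x|)| ≤ F.a * |Real.log (F.dS x)| := by
  have hd : deriv F.f x ≠ 0 := fun h => hxS (Or.inl ⟨⟨hx, fun h' => hxS (Or.inr h')⟩, h⟩)
  refine ⟨hd, ?_⟩
  obtain ⟨⟨hr, -⟩, -, ⟨h2, -⟩, -⟩ := hA x hx hxS hfx
  have hd0 : 0 ≤ F.dS x := Metric.infDist_nonneg
  have hr0 : 0 < F.r x := lt_of_le_of_lt
    (le_min (Real.rpow_nonneg hd0 _) (Real.rpow_nonneg Metric.infDist_nonneg _)) hr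
  obtain ⟨hlo, hup⟩ := h2 x (Metric.mem_ball_self (by positivity))
  have ha := F.ha
  have hpos : 0 < F.dS x := by
    rcases hd0.lt_or_eq with h | h
    · exact h
    · rw [← h, Real.zero_rpow (by linarith)] at hup
      exact absurd (abs_eq_zero.1 (le_antisymm hup (abs_nonneg _))) hd
  have h1 := Real.log_le_log (Real.rpow_pos_of_pos hpos _) hlo
  have h3 := Real.log_le_log (abs_pos.2 hd) hup
  rw [Real.log_rpow hpos] at h1 h3
  have e : F.a * |Real.log (F.dS x)| = |F.a * Real.log (F.dS x)| := by
    rw [abs_mul, abs_of_pos (by linarith : (0:ℝ) < F.a)]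
  rw [e, abs_le]
  have h5 := neg_abs_le (F.a * Real.log (F.dS x))
  have h6 := le_abs_self (F.a * Real.log (F.dS x))
  have h7 := neg_le_abs (F.a * Real.log (F.dS x))
  constructor <;> linarith

lemma fhatI_mp {μhat : Measure (ℤ → ℝ)} (hinv2 : μhat.map fhat = μhat) (n : ℤ) :
    MeasurePreserving (fhatI n) μhat μhat := by
  have mp : MeasurePreserving fhat μhat μhat := ⟨measurable_fhat, hinv2⟩
  have mp' : MeasurePreserving (fhatI (-1)) μhat μhat := by
    refine ⟨measurable_fhatI _, ?_⟩
    conv_lhs => rw [← hinv2]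
    rw [Measure.map_map (measurable_fhatI _) measurable_fhat]
    have : fhatI (-1) ∘ fhat = id := by
      funext x m; simp only [Function.comp_apply, fhat, fhatI, id]; congr 1; ring
    rw [this, Measure.map_id]
  obtain ⟨k, rfl | rfl⟩ := n.eq_nat_or_neg
  · have := mp.iterate k
    have e : fhat^[k] = fhatI (k:ℤ) := funext fun x => fhat_iter x k
    rwa [e] at this
  · have := mp'.iterate k
    have e : (fhatI (-1))^[k] = fhatI (-(k:ℤ)) := funext fun x => fhatI_neg_iter x k
    rwa [e] at this

lemma inMhat_ae (F : GoodMap) {μ : Measure ℝ} (hfm : AEMeasurable F.f μ)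
    {μhat : Measure (ℤ → ℝ)} [IsProbabilityMeasure μhat]
    (hcoord : ∀ P : ℝ → Prop, (∀ᵐ y ∂μ, P y) → ∀ᵐ x ∂μhat, ∀ n : ℤ, P (x n))
    (hsupp : μhat {x | inMhat F.f x} = 1) : ∀ᵐ x ∂μhat, inMhat F.f x := by
  have hae : ∀ᵐ x ∂μhat, ∀ n : ℤ, F.f (x n) = hfm.mk F.f (x n) := hcoord _ hfm.ae_eq_mk
  have hms : MeasurableSet {x : ℤ → ℝ | inMhat (hfm.mk F.f) x} := by
    have : {x : ℤ → ℝ | inMhat (hfm.mk F.f) x} =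
        (⋂ n : ℤ, {x | x n ∈ Mset}) ∩ ⋂ n : ℤ, {x | hfm.mk F.f (x (n-1)) = x n} := by
      ext x; simp [inMhat]
    rw [this]
    refine (MeasurableSet.iInter fun n => ?_).inter (MeasurableSet.iInter fun n => ?_)
    · exact measurable_pi_apply n measurableSet_Icc
    · exact measurableSet_eq_fun (hfm.measurable_mk.comp (measurable_pi_apply _))
        (measurable_pi_apply _)
  have heq : {x : ℤ → ℝ | inMhat F.f x} =ᵐ[μhat] {x | inMhat (hfm.mk F.f) x} := by
    filter_upwards [hae] with x hx
    apply propext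
    change inMhat F.f x ↔ inMhat (hfm.mk F.f) x
    simp only [inMhat, hx]
  have h1 : μhat {x | inMhat (hfm.mk F.f) x} = 1 := by rw [← measure_congr heq]; exact hsupp
  have h2 : ∀ᵐ x ∂μhat, inMhat (hfm.mk F.f) x := by
    have := (prob_compl_eq_zero_iff hms).2 h1
    exact this
  filter_upwards [h2, hae] with x hx hx'
  simpa only [inMhat, hx'] using hx

/-- if `μ̂` is the lift of an f-adapted χ-expanding measure, then
`μ̂(NUE*_χ) = 1` (Lemma 2.2). -/
theorem lift_full_measure_NUEstar (F : GoodMap) (hA : F.SatA) (χ : ℝ) (hχ : 0 < χ)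
    (μ : Measure ℝ) (hprob : IsProbabilityMeasure μ) (hM : μ Mset = 1)
    (hinv : μ.map F.f = μ)
    (hS : μ F.S = 0) (hint : Integrable (fun x => Real.log (F.dS x)) μ)
    (hexp : ∀ᵐ x ∂μ, (∀ n : ℕ, F.f^[n] x ∉ F.S) ∧
      ∃ l > χ, Tendsto
        (fun n : ℕ => Real.log |∏ j ∈ Finset.range n, deriv F.f (F.f^[j] x)| / (n:ℝ))
        atTop (𝓝 l))
    (μhat : Measure (ℤ → ℝ)) (hprob2 : IsProbabilityMeasure μhat)
    (hsupp : μhat {x | inMhat F.f x} = 1)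
    (hinv2 : μhat.map fhat = μhat)
    (hproj : μhat.map (fun x => x 0) = μ) :
    μhat (NUEstar F χ) = 1 := by
  have mpI : ∀ n : ℤ, MeasurePreserving (fhatI n) μhat μhat := fhatI_mp hinv2
  have mp : MeasurePreserving fhat μhat μhat := ⟨measurable_fhat, hinv2⟩
  have ev0 : MeasurePreserving (fun x : ℤ → ℝ => x 0) μhat μ := ⟨measurable_pi_apply 0, hproj⟩
  have hcoord : ∀ P : ℝ → Prop, (∀ᵐ y ∂μ, P y) → ∀ᵐ x ∂μhat, ∀ n : ℤ, P (x n) := by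
    intro P hP
    refine ae_all_iff.2 fun n => ?_
    have := (ev0.comp (mpI n)).quasiMeasurePreserving.ae hP
    simpa [fhatI] using this
  have hfm : AEMeasurable F.f μ := by
    by_contra h
    rw [Measure.map_of_not_aemeasurable h] at hinv
    exact IsProbabilityMeasure.ne_zero μ hinv.symm
  have hin : ∀ᵐ x ∂μhat, inMhat F.f x := inMhat_ae F hfm hcoord hsupp
  have hnS : ∀ᵐ x ∂μhat, ∀ n : ℤ, x n ∉ F.S :=
    hcoord _ (measure_eq_zero_iff_ae_notMem.1 hS)
  have hgood : ∀ᵐ x ∂μhat, ∀ n : ℤ, deriv F.f (x n) ≠ 0 ∧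
      |Real.log (|deriv F.f (x n)|)| ≤ F.a * |Real.log (F.dS (x n))| := by
    filter_upwards [hin, hnS] with x hx hxS n
    refine good_point F hA (hx.1 n) (hxS n) ?_
    have := hx.2 (n+1)
    rw [add_sub_cancel_right] at this
    rw [this]; exact hxS _
  -- the two observables
  have hdSm : Measurable (fun x : ℤ → ℝ => Real.log (F.dS (x 0))) := by
    have : Measurable F.dS := (Metric.continuous_infDist_pt F.S).measurable
    exact Real.measurable_log.comp (this.comp (measurable_pi_apply 0))
  have hdSi : Integrable (fun x : ℤ → ℝ => Real.log (F.dS (x 0))) μhat :=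
    ev0.integrable_comp_of_integrable hint
  have hφm : Measurable (fun x : ℤ → ℝ => Real.log (|deriv F.f (x 0)|)) :=
    Real.measurable_log.comp
      (continuous_abs.measurable.comp ((measurable_deriv F.f).comp (measurable_pi_apply 0)))
  have hφi : Integrable (fun x : ℤ → ℝ => Real.log (|deriv F.f (x 0)|)) μhat := by
    refine Integrable.mono' (hdSi.abs.const_mul F.a) hφm.aestronglyMeasurable ?_
    filter_upwards [hgood] with x hx
    exact (hx 0).2
  -- shifted backward observable
  have hφm' : Measurable (fun x : ℤ → ℝ => Real.log (|deriv F.f (x (-1))|)) :=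
    Real.measurable_log.comp
      (continuous_abs.measurable.comp ((measurable_deriv F.f).comp (measurable_pi_apply (-1))))
  have hF := birkhoff_ae mp hφm hφi
  have hBk := birkhoff_ae (mpI (-1)) hφm hφi
  rw [invariants_eq] at hBk
  have hBk' := (mpI (-1)).quasiMeasurePreserving.ae hBk
  have hei : ∀ x, (μhat[fun x : ℤ → ℝ => Real.log (|deriv F.f (x 0)|) |
      MeasurableSpace.invariants fhat]) (fhatI (-1) x) =
      (μhat[fun x : ℤ → ℝ => Real.log (|deriv F.f (x 0)|) |
      MeasurableSpace.invariants fhat]) x := by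
    intro x
    have hm : Measurable[MeasurableSpace.invariants (fhatI (-1))]
        (μhat[fun x : ℤ → ℝ => Real.log (|deriv F.f (x 0)|) |
          MeasurableSpace.invariants fhat]) := by
      rw [invariants_eq]; exact stronglyMeasurable_condExp.measurable
    exact congrFun (MeasurableSpace.comp_eq_of_measurable_invariants hm) x
  have hR1 := orbit_div_tendsto_zero mp hdSm hdSi
  have hR2 := orbit_div_tendsto_zero (mpI (-1)) hdSm hdSi
  have hrec := recur_ae (mpI (-1)) (measurable_uPes F.f χ)
  have hexp' := hcoord _ hexp
  have hfin : ∀ᵐ x ∂μhat, x ∈ NUEstar F χ := by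
    filter_upwards [hin, hnS, hgood, hF, hBk', hR1, hR2, hrec, hexp'] with
      x hx hxS hg hf hb hr1 hr2 hrc he
    rw [hei] at hb
    set l := (μhat[fun x : ℤ → ℝ => Real.log (|deriv F.f (x 0)|) |
      MeasurableSpace.invariants fhat]) x with hl
    have hit : ∀ n : ℕ, F.f^[n] (x 0) = x (n:ℤ) := by
      intro n
      induction n with
      | zero => simp
      | succ n ih =>
        rw [Function.iterate_succ_apply', ih]
        have := hx.2 ((n:ℤ)+1)
        rw [add_sub_cancel_right] at this
        rw [this]; push_cast; rfl
    obtain ⟨-, l', hl', hlim⟩ := he 0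
    simp only [hit] at hlim
    have hlogp : ∀ (n : ℕ) (y : ℕ → ℝ), (∀ j, deriv F.f (y j) ≠ 0) →
        Real.log (|∏ j ∈ Finset.range n, deriv F.f (y j)|) =
          ∑ j ∈ Finset.range n, Real.log (|deriv F.f (y j)|) := by
      intro n y hy
      rw [Finset.abs_prod, Real.log_prod fun j _ => abs_ne_zero.2 (hy j)]
    have hll : l = l' := by
      refine tendsto_nhds_unique (hf.congr fun n => ?_) hlim
      rw [hlogp n (fun j => x (j:ℤ)) fun j => (hg _).1]
      simp only [birkhoffSum, fhat_iter, fhatI, zero_add]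
    have hback : Tendsto (fun n : ℕ =>
        Real.log (|∏ j ∈ Finset.range n, deriv F.f (x (-(j:ℤ) - 1))|) / (n:ℝ)) atTop (𝓝 l) := by
      refine hb.congr fun n => ?_
      rw [hlogp n (fun j => x (-(j:ℤ) - 1)) fun j => (hg _).1]
      simp only [birkhoffSum, fhatI_neg_iter, fhatI, zero_add]
      rfl
    have hlχ : χ < l := hll ▸ hl'
    refine ⟨⟨hx, hxS, ⟨l', hl', ?_⟩, ⟨l, hlχ, ?_⟩⟩, ⟨hx, hxS, ?_, ?_⟩, ?_, ?_⟩
    · simpa only [dfhat_nat] using hlim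
    · refine hback.congr fun n => ?_
      rw [dfhat_neg_nat, abs_inv, Real.log_inv, neg_div_neg_eq]
    · simpa only [fhat_iter, fhatI, zero_add] using hr1
    · simpa only [fhatI_neg_iter, fhatI, zero_add] using hr2
    · obtain ⟨k, hk, hkl⟩ := hrc
      refine ⟨fun i => -(k i : ℤ), ?_, ?_⟩
      · exact tendsto_neg_atTop_atBot.comp (tendsto_natCast_atTop_atTop.comp hk.tendsto_atTop)
      · simpa only [fhatI_neg_iter] using hkl
    · exact temper F.f x (fun n => (hg n).1) hlχ hback
  have huniv : NUEstar F χ =ᵐ[μhat] Set.univ := eventuallyEq_univ.2 hfin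
  rw [measure_congr huniv, measure_univ]

end OneDim
end
end

section
/- (Tempering Kernel) Assume f satisfies (A1)–(A3), fix χ > 0 and ε > 0. For every x̂ ∈ NUE*_χ, lim_{n→−∞} (1/|n|) log Q_ε(f̂^n(x̂)) = 0. -/
open Real MeasureTheory Filter Topology Metric Set

noncomputable section

namespace OneDim

/-- Positivity of the distance to the singular set along a regular orbit. -/
lemma dS_pos (F : GoodMap) (hA : F.SatA) (x : ℤ → ℝ) (hM : inMhat F.f x)
    (hS : ∀ n, x n ∉ F.S) (n : ℤ) : 0 < F.dS (x n) := by
  have h0 : ∀ y, 0 ≤ F.dS y := fun y => Metric.infDist_nonneg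
  have hf : F.f (x n) = x (n + 1) := by
    have := hM.2 (n + 1)
    simpa using this
  obtain ⟨⟨hr, -⟩, -, ⟨h2, -⟩, -⟩ := hA (x n) (hM.1 n) (hS n) (by rw [hf]; exact hS _)
  rcases (h0 (x n)).lt_or_eq with h | h
  · exact h
  exfalso
  have hr0 : 0 < F.r (x n) :=
    lt_of_le_of_lt (le_min (Real.rpow_nonneg (h0 _) _) (Real.rpow_nonneg (h0 _) _)) hr
  have h3 := (h2 (x n) (Metric.mem_ball_self (by linarith))).2
  have ha := F.ha
  rw [← h, Real.zero_rpow (by linarith)] at h3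
  have h4 : deriv F.f (x n) = 0 := abs_eq_zero.1 (le_antisymm h3 (abs_nonneg _))
  apply hS n
  by_cases hD : x n ∈ F.D
  · exact Or.inr hD
  · exact Or.inl ⟨⟨hM.1 n, hD⟩, h4⟩

lemma deriv_ne (F : GoodMap) (x : ℤ → ℝ) (hM : inMhat F.f x)
    (hS : ∀ n, x n ∉ F.S) (n : ℤ) : deriv F.f (x n) ≠ 0 := by
  intro h4
  apply hS n
  by_cases hD : x n ∈ F.D
  · exact Or.inr hD
  · exact Or.inl ⟨⟨hM.1 n, hD⟩, h4⟩

lemma dfhat_neg (f : ℝ → ℝ) (x : ℤ → ℝ) (n : ℕ) :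
    dfhat f x (-(n:ℤ)) = (∏ j ∈ Finset.range n, deriv f (x (-(j : ℤ) - 1)))⁻¹ := by
  unfold dfhat
  rcases Nat.eq_zero_or_pos n with h | h
  · subst h; simp
  · rw [if_neg (by omega)]
    simp

lemma summable_u (F : GoodMap) (χ : ℝ) (x : ℤ → ℝ) (hx : x ∈ NUE F χ) :
    Summable (fun n : ℕ => Real.exp (2 * (n:ℝ) * χ) * (dfhat F.f x (-(n:ℤ))) ^ 2) := by
  obtain ⟨hM, hS, -, l, hl, hlim⟩ := hx
  obtain ⟨c, hc1, hc2⟩ := exists_between hl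
  have hg : Summable (fun n : ℕ => Real.exp ((n:ℝ) * (2 * (χ - c)))) :=
    Real.summable_exp_nat_mul_iff.2 (by linarith)
  refine hg.of_norm_bounded_eventually_nat ?_
  filter_upwards [hlim.eventually (lt_mem_nhds hc2), eventually_gt_atTop 0] with n hn hn0
  have hn0' : (0:ℝ) < n := by exact_mod_cast hn0
  have hne : dfhat F.f x (-(n:ℤ)) ≠ 0 := by
    rw [dfhat_neg]
    exact inv_ne_zero (Finset.prod_ne_zero_iff.2 fun j _ => deriv_ne F x hM hS _)
  have h1 : Real.log |dfhat F.f x (-(n:ℤ))| ≤ -(c * n) := by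
    rw [div_neg, lt_neg, div_lt_iff₀ hn0'] at hn
    linarith
  have h2 : |dfhat F.f x (-(n:ℤ))| ≤ Real.exp (-(c * n)) :=
    (Real.log_le_iff_le_exp (abs_pos.2 hne)).1 h1
  rw [Real.norm_of_nonneg (by positivity), ← sq_abs]
  calc Real.exp (2 * (n:ℝ) * χ) * |dfhat F.f x (-(n:ℤ))| ^ 2
      ≤ Real.exp (2 * (n:ℝ) * χ) * Real.exp (-(c * n)) ^ 2 := by gcongr
    _ = Real.exp ((n:ℝ) * (2 * (χ - c))) := by
        rw [← Real.exp_nat_mul, ← Real.exp_add]; congr 1; push_cast; ring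

lemma u_pos (F : GoodMap) (χ : ℝ) (x : ℤ → ℝ) (hx : x ∈ NUE F χ) (k : ℕ) :
    0 < uPes F.f χ (fhatI (-(k:ℤ)) x) := by
  have hs := (summable_nat_add_iff k).2 (summable_u F χ x hx)
  obtain ⟨hM, hS, -⟩ := hx
  have hs2 : Summable (fun n : ℕ => Real.exp (2 * (n:ℝ) * χ) *
      (dfhat F.f (fhatI (-(k:ℤ)) x) (-(n:ℤ))) ^ 2) := by
    refine (hs.mul_left (Real.exp (-(2 * (k:ℝ) * χ)) *
      (∏ j ∈ Finset.range k, deriv F.f (x (-(j : ℤ) - 1))) ^ 2)).congr fun n => ?_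
    have hk : (∏ j ∈ Finset.range k, deriv F.f (x (-(j : ℤ) - 1))) ≠ 0 :=
      Finset.prod_ne_zero_iff.2 fun j _ => deriv_ne F x hM hS _
    have hp : (∏ j ∈ Finset.range n, deriv F.f (fhatI (-(k:ℤ)) x (-(j : ℤ) - 1)))
        = ∏ j ∈ Finset.range n, deriv F.f (x (-((k + j : ℕ) : ℤ) - 1)) := by
      refine Finset.prod_congr rfl fun j _ => ?_
      simp only [fhatI]
      congr 2
      push_cast
      ring
    have he : Real.exp (2 * ((n + k : ℕ):ℝ) * χ)
        = Real.exp (2 * (n:ℝ) * χ) * Real.exp (2 * (k:ℝ) * χ) := by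
      rw [← Real.exp_add]; congr 1; push_cast; ring
    rw [dfhat_neg, dfhat_neg, hp, he, add_comm n k, Finset.prod_range_add, Real.exp_neg, mul_inv]
    have := Real.exp_ne_zero (2 * (k:ℝ) * χ)
    generalize (∏ j ∈ Finset.range k, deriv F.f (x (-(j : ℤ) - 1))) = P at *
    generalize (∏ j ∈ Finset.range n, deriv F.f (x (-((k + j : ℕ) : ℤ) - 1)))⁻¹ = R at *
    field_simp
  refine Real.sqrt_pos.2 (hs2.tsum_pos (fun n => by positivity) 0 ?_)
  have := dfhat_neg F.f (fhatI (-(k:ℤ)) x) 0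
  simp only [Nat.cast_zero] at this ⊢
  rw [this]
  simp

lemma tend_succ (h : ℕ → ℝ) (hh : Tendsto (fun n : ℕ => h n / (n:ℝ)) atTop (𝓝 0)) :
    Tendsto (fun n : ℕ => h (n + 1) / (n:ℝ)) atTop (𝓝 0) := by
  have h1 := (tendsto_add_atTop_iff_nat 1).2 hh
  have h2 : Tendsto (fun n : ℕ => 1 + 1 / (n:ℝ)) atTop (𝓝 (1 + 0)) :=
    tendsto_const_nhds.add tendsto_one_div_atTop_nhds_zero_nat
  have h3 := h1.mul h2
  rw [zero_mul] at h3
  refine h3.congr' ?_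
  filter_upwards [eventually_gt_atTop 0] with n hn
  have hn0' : (0:ℝ) < n := by exact_mod_cast hn
  push_cast
  field_simp

lemma tend_pred (h : ℕ → ℝ) (hh : Tendsto (fun n : ℕ => h n / (n:ℝ)) atTop (𝓝 0)) :
    Tendsto (fun n : ℕ => h (n - 1) / (n:ℝ)) atTop (𝓝 0) := by
  rw [← tendsto_add_atTop_iff_nat 1]
  have h2 := hh.mul (tendsto_natCast_div_add_atTop (1:ℝ))
  rw [zero_mul] at h2
  refine h2.congr' ?_
  filter_upwards [eventually_gt_atTop 0] with n hn
  have hn0' : (0:ℝ) < n := by exact_mod_cast hn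
  simp only [Nat.add_sub_cancel]
  push_cast
  field_simp

lemma log_min (a b : ℝ) (ha : 0 < a) (hb : 0 < b) :
    Real.log (min a b) = min (Real.log a) (Real.log b) := by
  rcases le_total a b with h | h
  · rw [min_eq_left h, min_eq_left (Real.log_le_log ha h)]
  · rw [min_eq_right h, min_eq_right (Real.log_le_log hb h)]

lemma Qeps_bounds (F : GoodMap) (χ ε : ℝ) (hε : 0 < ε) (y : ℤ → ℝ)
    (hQ : 0 < Qtilde F χ ε y) :
    min 0 (Real.log (Qtilde F χ ε y)) - ε / 3 ≤ Real.log (Qeps F χ ε y) ∧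
      Real.log (Qeps F χ ε y) ≤ 0 := by
  set L := Real.log (Qtilde F χ ε y) with hL
  set N := ⌈max 0 (-(3 * L / ε))⌉₊ with hN
  have hN1 : max 0 (-(3 * L / ε)) ≤ N := Nat.le_ceil _
  have hN2 : (N:ℝ) < max 0 (-(3 * L / ε)) + 1 := Nat.ceil_lt_add_one (le_max_left _ _)
  have hb : ∀ q ∈ {q | q ∈ Ieps ε ∧ q ≤ Qtilde F χ ε y}, q ≤ 1 := by
    rintro q ⟨⟨n, rfl⟩, -⟩
    rw [Real.exp_le_one_iff]
    have : 0 ≤ ε * n := by positivity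
    linarith
  have hmem : Real.exp (-(ε * N) / 3) ∈ {q | q ∈ Ieps ε ∧ q ≤ Qtilde F χ ε y} := by
    refine ⟨⟨N, rfl⟩, ?_⟩
    rw [← Real.le_log_iff_exp_le hQ, ← hL]
    have h1 : -(3 * L / ε) ≤ N := (le_max_right _ _).trans hN1
    have h2 : -(3 * L / ε) * ε ≤ N * ε := by gcongr
    have h3 : -(3 * L / ε) * ε = -(3 * L) := by field_simp
    linarith
  have hle : Real.exp (-(ε * N) / 3) ≤ Qeps F χ ε y := le_csSup ⟨1, hb⟩ hmem
  have hle1 : Qeps F χ ε y ≤ 1 := csSup_le ⟨_, hmem⟩ hb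
  have hpos : 0 < Qeps F χ ε y := (Real.exp_pos _).trans_le hle
  refine ⟨?_, Real.log_nonpos hpos.le hle1⟩
  refine le_trans ?_ ((Real.le_log_iff_exp_le hpos).2 hle)
  rcases max_cases 0 (-(3 * L / ε)) with ⟨h, -⟩ | ⟨h, -⟩
  · rw [h] at hN2
    have : ε * N ≤ ε * 1 := by gcongr; linarith
    have := min_le_left 0 L
    linarith
  · rw [h] at hN2
    have h2 : ε * N ≤ ε * (-(3 * L / ε) + 1) := by gcongr
    have h3 : ε * (-(3 * L / ε) + 1) = -(3 * L) + ε := by field_simp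
    have := min_le_right 0 L
    linarith

/-- Tempering Kernel Lemma. -/
theorem tempering_kernel (F : GoodMap) (hA : F.SatA) (χ : ℝ) (hχ : 0 < χ)
    (ε : ℝ) (hε : 0 < ε) (x : ℤ → ℝ) (hx : x ∈ NUEstar F χ) :
    Tendsto (fun n : ℕ => Real.log (Qeps F χ ε (fhatI (-(n:ℤ)) x)) / (n:ℝ)) atTop (𝓝 0) := by
  obtain ⟨hN, ⟨hM, hS, -, hd⟩, -, hu⟩ := hx
  have hdp := dS_pos F hA x hM hS
  have hup := u_pos F χ x hN
  have hu0 : Tendsto (fun n : ℕ => Real.log (uPes F.f χ (fhatI (-(n:ℤ)) x)) / (n:ℝ))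
      atTop (𝓝 0) := by
    have := hu.neg
    simpa [div_neg] using this
  have hu1 := tend_succ (fun n => Real.log (uPes F.f χ (fhatI (-(n:ℤ)) x))) hu0
  have hd1 := tend_succ (fun n => Real.log (F.dS (x (-(n:ℤ))))) hd
  have hd2 := tend_pred (fun n => Real.log (F.dS (x (-(n:ℤ))))) hd
  have hc : Tendsto (fun n : ℕ => (3 / F.β * Real.log ε) / (n:ℝ)) atTop (𝓝 0) :=
    tendsto_const_div_atTop_nhds_zero_nat _
  have he : Tendsto (fun n : ℕ => (ε / 3) / (n:ℝ)) atTop (𝓝 0) :=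
    tendsto_const_div_atTop_nhds_zero_nat _
  have hz : Tendsto (fun _ : ℕ => (0:ℝ)) atTop (𝓝 0) := tendsto_const_nhds
  have hbig := (hz.min (hc.add ((hu0.const_mul (-(24 / F.β))).min
    ((hu1.const_mul (-(12 / F.β))).add
      ((hd1.min (hd.min hd2)).const_mul (72 * F.a / F.β)))))).sub he
  simp only [mul_zero, add_zero, min_self, sub_zero] at hbig
  have key : ∀ n : ℕ, 0 < n →
      min 0 (3 / F.β * Real.log ε +
        min (-(24 / F.β) * Real.log (uPes F.f χ (fhatI (-(n:ℤ)) x)))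
          (-(12 / F.β) * Real.log (uPes F.f χ (fhatI (-((n + 1 : ℕ) : ℤ)) x)) +
            72 * F.a / F.β * min (Real.log (F.dS (x (-((n + 1 : ℕ) : ℤ)))))
          (min (Real.log (F.dS (x (-(n:ℤ)))))
            (Real.log (F.dS (x (-((n - 1 : ℕ) : ℤ)))))))) - ε / 3
        ≤ Real.log (Qeps F χ ε (fhatI (-(n:ℤ)) x)) ∧
      Real.log (Qeps F χ ε (fhatI (-(n:ℤ)) x)) ≤ 0 := by
    intro n hn
    have hn0 : (0:ℝ) < n := by exact_mod_cast hn
    have hshift : fhatI (-1) (fhatI (-(n:ℤ)) x) = fhatI (-((n + 1 : ℕ) : ℤ)) x := by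
      funext m
      simp only [fhatI]
      congr 1
      push_cast
      ring
    have e1 : fhatI (-(n:ℤ)) x (-1) = x (-((n + 1 : ℕ) : ℤ)) := by
      simp only [fhatI]
      congr 1
      push_cast
      ring
    have e2 : fhatI (-(n:ℤ)) x 0 = x (-(n:ℤ)) := by simp [fhatI]
    have e3 : fhatI (-(n:ℤ)) x 1 = x (-((n - 1 : ℕ) : ℤ)) := by
      simp only [fhatI]
      congr 1
      omega
    have p1 := hup n
    have p2 := hup (n + 1)
    have q1 := hdp (-((n + 1 : ℕ) : ℤ))
    have q2 := hdp (-(n:ℤ))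
    have q3 := hdp (-((n - 1 : ℕ) : ℤ))
    have hρ : 0 < rho F (fhatI (-(n:ℤ)) x) := by
      unfold rho
      rw [e1, e2, e3]
      exact lt_min q1 (lt_min q2 q3)
    have hρl : Real.log (rho F (fhatI (-(n:ℤ)) x)) =
        min (Real.log (F.dS (x (-((n + 1 : ℕ) : ℤ)))))
          (min (Real.log (F.dS (x (-(n:ℤ))))) (Real.log (F.dS (x (-((n - 1 : ℕ) : ℤ)))))) := by
      unfold rho
      rw [e1, e2, e3, log_min _ _ q1 (lt_min q2 q3), log_min _ _ q2 q3]
    have w1 := Real.rpow_pos_of_pos p1 (-(24 / F.β))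
    have w2 := Real.rpow_pos_of_pos p2 (-(12 / F.β))
    have w3 := Real.rpow_pos_of_pos hρ (72 * F.a / F.β)
    have w4 := Real.rpow_pos_of_pos hε (3 / F.β)
    have hQ : 0 < Qtilde F χ ε (fhatI (-(n:ℤ)) x) := by
      unfold Qtilde
      rw [hshift]
      exact mul_pos w4 (lt_min w1 (mul_pos w2 w3))
    have hQl : Real.log (Qtilde F χ ε (fhatI (-(n:ℤ)) x)) = 3 / F.β * Real.log ε +
        min (-(24 / F.β) * Real.log (uPes F.f χ (fhatI (-(n:ℤ)) x)))
          (-(12 / F.β) * Real.log (uPes F.f χ (fhatI (-((n + 1 : ℕ) : ℤ)) x)) +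
            72 * F.a / F.β * Real.log (rho F (fhatI (-(n:ℤ)) x))) := by
      unfold Qtilde
      rw [hshift, Real.log_mul w4.ne' (lt_min w1 (mul_pos w2 w3)).ne',
        log_min _ _ w1 (mul_pos w2 w3), Real.log_mul w2.ne' w3.ne',
        Real.log_rpow hε, Real.log_rpow p1, Real.log_rpow p2, Real.log_rpow hρ]
    have hB := Qeps_bounds F χ ε hε _ hQ
    rw [hQl, hρl] at hB
    exact hB
  refine tendsto_of_tendsto_of_tendsto_of_le_of_le' hbig hz ?_ ?_
  · filter_upwards [eventually_gt_atTop 0] with n hn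
    have hn0 : (0:ℝ) < n := by exact_mod_cast hn
    have hB1 := div_le_div_of_nonneg_right (key n hn).1 hn0.le
    rw [sub_div, ← min_div_div_right hn0.le, zero_div, add_div,
      ← min_div_div_right hn0.le, add_div, mul_div_assoc (-(24 / F.β)),
      mul_div_assoc (-(12 / F.β)), mul_div_assoc (72 * F.a / F.β),
      ← min_div_div_right hn0.le, ← min_div_div_right hn0.le] at hB1
    exact hB1
  · filter_upwards [eventually_gt_atTop 0] with n hn
    exact div_nonpos_of_nonpos_of_nonneg (key n hn).2 (Nat.cast_nonneg n)


end OneDim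
end
end

section
/- Assume f satisfies (A1)–(A3) and fix χ > 0. There is ε₀ > 0 such that for all 0 < ε < ε₀: if Ψ_{x̂₁}^{p₁} and Ψ_{x̂₂}^{p₂} are ε-charts that ε-overlap, then: (1) e^{−(p₁p₂)³} ≤ u(x̂₁)/u(x̂₂) ≤ e^{(p₁p₂)³}; (2) Ψ_{x̂ᵢ}([−e^{−2ε}pᵢ, e^{−2ε}pᵢ]) ⊂ Ψ_{x̂ⱼ}([−pⱼ, pⱼ]) for all i, j ∈ {1,2}; (3) for all i, j ∈ {1,2}, the affine map φ := Ψ_{x̂ᵢ}^{−1} ∘ Ψ_{x̂ⱼ} satisfies sup_{t∈[−1,1]} |φ(t) − t| + sup_{t∈[−1,1]} |φ'(t) − 1| < ε(p₁p₂)³. -/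
open Real MeasureTheory Filter Topology Metric Set

noncomputable section

namespace OneDim

lemma chart_bounds (F : GoodMap) (χ ε : ℝ) (hε : 0 < ε) (hε1 : ε < 1 / 2) (c : Chart)
    (hc : IsChart F χ ε c) :
    1 ≤ uPes F.f χ c.x ∧ 0 < c.p ∧ c.p ≤ 1 ∧ uPes F.f χ c.x * c.p ≤ ε / 4 := by
  obtain ⟨-, hp, hq⟩ := hc
  have hβ := F.hβ0
  have hβ1 := F.hβ1
  have hne : {q | q ∈ Ieps ε ∧ q ≤ Qtilde F χ ε c.x}.Nonempty := by
    by_contra h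
    rw [Set.not_nonempty_iff_eq_empty] at h
    rw [Qeps, h, Real.sSup_empty] at hq
    linarith
  have hpQ : c.p ≤ Qtilde F χ ε c.x := hq.trans (csSup_le hne fun q hq => hq.2)
  have hpu : c.p ≤ ε ^ (3 / F.β) * uPes F.f χ c.x ^ (-(24 / F.β)) := by
    refine hpQ.trans ?_
    unfold Qtilde
    exact mul_le_mul_of_nonneg_left (min_le_left _ _) (by positivity)
  have hu0 : uPes F.f χ c.x ≠ 0 := by
    intro h
    rw [h, Real.zero_rpow (by
      have : 0 < 24 / F.β := by positivity
      linarith), mul_zero] at hpu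
    linarith
  have hsum : Summable
      (fun n : ℕ => Real.exp (2 * (n:ℝ) * χ) * (dfhat F.f c.x (-(n:ℤ))) ^ 2) := by
    by_contra h
    apply hu0
    rw [uPes, tsum_eq_zero_of_not_summable h, Real.sqrt_zero]
  have hu1 : 1 ≤ uPes F.f χ c.x := by
    rw [uPes, Real.one_le_sqrt]
    have := hsum.le_tsum 0 (fun j _ => by positivity)
    simpa [dfhat] using this
  set u := uPes F.f χ c.x
  have h3 : 3 ≤ 3 / F.β := by
    rw [le_div_iff₀ hβ]; linarith
  have h24 : 1 ≤ 24 / F.β := by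
    rw [le_div_iff₀ hβ]; linarith
  have e1 : ε ^ (3 / F.β) ≤ ε ^ (3 : ℝ) :=
    Real.rpow_le_rpow_of_exponent_ge hε (by linarith) h3
  have e2 : u ^ (-(24 / F.β)) ≤ u ^ (-1 : ℝ) :=
    Real.rpow_le_rpow_of_exponent_le hu1 (by linarith)
  have e3 : ε ^ (3 : ℝ) ≤ ε / 4 := by
    have : ε ^ (3 : ℝ) = ε ^ 3 := by exact_mod_cast Real.rpow_natCast ε 3
    rw [this]
    nlinarith [mul_pos hε hε]
  rw [Real.rpow_neg_one] at e2
  have hu : 0 < u := by linarith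
  have hup : c.p ≤ ε / 4 * u⁻¹ :=
    hpu.trans (mul_le_mul (e1.trans e3) e2 (by positivity) (by positivity))
  have hfin : u * c.p ≤ ε / 4 := by
    calc u * c.p ≤ u * (ε / 4 * u⁻¹) := by gcongr
      _ = ε / 4 := by field_simp
  refine ⟨hu1, hp, ?_, hfin⟩
  nlinarith

lemma phi_bound {u v x y P δ t : ℝ} (hu : 1 ≤ u) (hv : 1 ≤ v) (hP : 0 < P)
    (hd : |x - y| + |u⁻¹ - v⁻¹| < P ^ 4) (huP : u * P ≤ δ) (ht : |t| ≤ 1) :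
    |u * (t / v + y - x) - t| ≤ δ * P ^ 3 := by
  have hu0 : 0 < u := by linarith
  have hv0 : 0 < v := by linarith
  have e : u * (t / v + y - x) - t = -(u * ((x - y) + (u⁻¹ - v⁻¹) * t)) := by
    field_simp; ring
  rw [e, abs_neg, abs_mul, abs_of_pos hu0]
  have h1 : |(x - y) + (u⁻¹ - v⁻¹) * t| ≤ P ^ 4 := by
    refine (abs_add_le _ _).trans ?_
    rw [abs_mul]
    have := mul_le_mul_of_nonneg_left ht (abs_nonneg (u⁻¹ - v⁻¹))
    linarith
  calc _ ≤ u * P ^ 4 := by gcongr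
    _ = (u * P) * P ^ 3 := by ring
    _ ≤ _ := by gcongr

lemma ratio_bound {u v x y P δ : ℝ} (hu : 1 ≤ u) (hv : 1 ≤ v) (hP : 0 < P)
    (hd : |x - y| + |u⁻¹ - v⁻¹| < P ^ 4) (huP : u * P ≤ δ) :
    |u / v - 1| ≤ δ * P ^ 3 := by
  have h := phi_bound (x := 0) (y := 0) (t := 1) hu hv hP
    (by simpa using (lt_of_le_of_lt (le_add_of_nonneg_left (abs_nonneg (x - y))) hd)) huP (by simp)
  convert h using 2
  ring

/-- the overlap proposition (Proposition 2.5). -/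
theorem overlap_prop (F : GoodMap) (hA : F.SatA) (χ : ℝ) (hχ : 0 < χ) :
    ∃ ε₀ > 0, ∀ ε : ℝ, 0 < ε → ε < ε₀ →
      ∀ c₁ c₂ : Chart, IsChart F χ ε c₁ → IsChart F χ ε c₂ → Overlap F χ ε c₁ c₂ →
        -- (1) control of u
        (Real.exp (-((c₁.p * c₂.p) ^ 3)) ≤ uPes F.f χ c₁.x / uPes F.f χ c₂.x ∧
          uPes F.f χ c₁.x / uPes F.f χ c₂.x ≤ Real.exp ((c₁.p * c₂.p) ^ 3)) ∧
        -- (2) overlap of ranges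
        (∀ ci cj : Chart, (ci = c₁ ∨ ci = c₂) → (cj = c₁ ∨ cj = c₂) →
          Psi F.f χ ci.x ''
              Set.Icc (-(Real.exp (-(2 * ε)) * ci.p)) (Real.exp (-(2 * ε)) * ci.p) ⊆
            Psi F.f χ cj.x '' Set.Icc (-cj.p) cj.p) ∧
        -- (3) change of coordinates
        (∀ ci cj : Chart, (ci = c₁ ∨ ci = c₂) → (cj = c₁ ∨ cj = c₂) →
          supNorm (fun t => uPes F.f χ ci.x * (Psi F.f χ cj.x t - ci.x 0) - t)
              (Set.Icc (-1) 1) +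
            supNorm
              (fun t => deriv (fun s => uPes F.f χ ci.x * (Psi F.f χ cj.x s - ci.x 0)) t - 1)
              (Set.Icc (-1) 1) < ε * (c₁.p * c₂.p) ^ 3) := by
  refine ⟨1 / 2, by norm_num, ?_⟩
  intro ε hε hε1 c₁ c₂ h₁ h₂ hO
  obtain ⟨hu₁, hp₁, hp₁1, hup₁⟩ := chart_bounds F χ ε hε hε1 c₁ h₁
  obtain ⟨hu₂, hp₂, hp₂1, hup₂⟩ := chart_bounds F χ ε hε hε1 c₂ h₂
  obtain ⟨hO1, hO2, hO3⟩ := hO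
  set P := c₁.p * c₂.p with hPdef
  have hP : 0 < P := mul_pos hp₁ hp₂
  have hP1 : P ≤ c₁.p := by nlinarith
  have hP2 : P ≤ c₂.p := by nlinarith
  have hPone : P ≤ 1 := hP1.trans hp₁1
  have hP3 : P ^ 3 ≤ P := by
    have := pow_le_pow_of_le_one hP.le hPone (show 1 ≤ 3 by norm_num)
    simpa using this
  have key : ∀ ci cj : Chart, (ci = c₁ ∨ ci = c₂) → (cj = c₁ ∨ cj = c₂) →
      1 ≤ uPes F.f χ ci.x ∧ 1 ≤ uPes F.f χ cj.x ∧
      |ci.x 0 - cj.x 0| + |(uPes F.f χ ci.x)⁻¹ - (uPes F.f χ cj.x)⁻¹| < P ^ 4 ∧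
      uPes F.f χ ci.x * P ≤ ε / 4 ∧ cj.p ≤ Real.exp ε * ci.p ∧ 0 < cj.p ∧ cj.p ≤ 1 ∧
      P ≤ ci.p := by
    have a1 : uPes F.f χ c₁.x * P ≤ ε / 4 :=
      (mul_le_mul_of_nonneg_left hP1 (by linarith)).trans hup₁
    have a2 : uPes F.f χ c₂.x * P ≤ ε / 4 :=
      (mul_le_mul_of_nonneg_left hP2 (by linarith)).trans hup₂
    have hE : 1 ≤ Real.exp ε := Real.one_le_exp hε.le
    have b12 : c₁.p ≤ Real.exp ε * c₂.p := (div_le_iff₀ hp₂).1 hO2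
    have b21 : c₂.p ≤ Real.exp ε * c₁.p := by
      have := (le_div_iff₀ hp₂).1 hO1
      calc c₂.p = Real.exp ε * (Real.exp (-ε) * c₂.p) := by
            rw [← mul_assoc, ← Real.exp_add]; simp
        _ ≤ _ := by gcongr
    have hP4 : 0 < P ^ 4 := by positivity
    rintro ci cj (rfl | rfl) (rfl | rfl)
    · exact ⟨hu₁, hu₁, by simpa using hP4, a1, by nlinarith, hp₁, hp₁1, hP1⟩
    · exact ⟨hu₁, hu₂, hO3, a1, b21, hp₂, hp₂1, hP1⟩
    · exact ⟨hu₂, hu₁, by rw [abs_sub_comm, abs_sub_comm (uPes F.f χ ci.x)⁻¹]; exact hO3,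
        a2, b12, hp₁, hp₁1, hP2⟩
    · exact ⟨hu₂, hu₂, by simpa using hP4, a2, by nlinarith, hp₂, hp₂1, hP2⟩
  have hP3pos : 0 < P ^ 3 := by positivity
  have ratio : ∀ ci cj : Chart, (ci = c₁ ∨ ci = c₂) → (cj = c₁ ∨ cj = c₂) →
      uPes F.f χ ci.x / uPes F.f χ cj.x ≤ Real.exp (P ^ 3) := by
    intro ci cj hi hj
    obtain ⟨k1, k2, k3, k4, -⟩ := key ci cj hi hj
    have := (abs_le.1 (ratio_bound k1 k2 hP k3 k4)).2
    have h2 := Real.add_one_le_exp (P ^ 3)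
    nlinarith
  refine ⟨⟨?_, ratio _ _ (Or.inl rfl) (Or.inr rfl)⟩, ?_, ?_⟩
  · have := ratio c₂ c₁ (Or.inr rfl) (Or.inl rfl)
    rw [Real.exp_neg, ← inv_div]
    exact inv_anti₀ (by
      have : 0 < uPes F.f χ c₁.x := by linarith
      have : 0 < uPes F.f χ c₂.x := by linarith
      positivity) this
  · rintro ci cj hi hj _ ⟨t, ht, rfl⟩
    obtain ⟨k1, k2, k3, k4, k5, k6, k7, k8⟩ := key cj ci hj hi
    have htp : |t| ≤ Real.exp (-(2 * ε)) * ci.p := abs_le.2 ht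
    have hexp1 : Real.exp (-(2 * ε)) ≤ 1 := Real.exp_le_one_iff.2 (by linarith)
    have ht1 : |t| ≤ 1 := htp.trans (by nlinarith [Real.exp_pos (-(2 * ε))])
    have hb := phi_bound k1 k2 hP k3 k4 ht1
    refine ⟨uPes F.f χ cj.x * (t / uPes F.f χ ci.x + ci.x 0 - cj.x 0), abs_le.1 ?_, ?_⟩
    · have h1 : |t| ≤ Real.exp (-ε) * cj.p := by
        refine htp.trans ?_
        calc _ ≤ Real.exp (-(2 * ε)) * (Real.exp ε * cj.p) := by gcongr
          _ = _ := by rw [← mul_assoc, ← Real.exp_add]; ring_nf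
      have h2 : Real.exp (-ε) ≤ 1 - ε / 2 := by
        rw [Real.exp_neg]
        refine (inv_anti₀ (by linarith) (Real.add_one_le_exp ε)).trans ?_
        rw [inv_le_iff_one_le_mul₀ (by linarith)]
        nlinarith
      have h3 := abs_sub_abs_le_abs_sub
        (uPes F.f χ cj.x * (t / uPes F.f χ ci.x + ci.x 0 - cj.x 0)) t
      have h4 : 0 < cj.p := lt_of_lt_of_le hP k8
      have h5 : Real.exp (-ε) * cj.p ≤ (1 - ε / 2) * cj.p := by gcongr
      have h6 : ε / 4 * P ^ 3 ≤ ε / 4 * cj.p :=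
        mul_le_mul_of_nonneg_left (hP3.trans k8) (by positivity)
      nlinarith
    · have : uPes F.f χ cj.x ≠ 0 := by linarith
      unfold Psi
      field_simp
      ring
  · intro ci cj hi hj
    obtain ⟨k1, k2, k3, k4, -⟩ := key ci cj hi hj
    have hne : (Set.Icc (-1 : ℝ) 1).Nonempty := ⟨0, by norm_num, by norm_num⟩
    have s1 : supNorm (fun t => uPes F.f χ ci.x * (Psi F.f χ cj.x t - ci.x 0) - t)
        (Set.Icc (-1) 1) ≤ ε / 4 * P ^ 3 := by
      refine csSup_le (hne.image _) ?_
      rintro _ ⟨t, ht, rfl⟩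
      exact phi_bound k1 k2 hP k3 k4 (abs_le.2 ht)
    have s2 : supNorm
        (fun t => deriv (fun s => uPes F.f χ ci.x * (Psi F.f χ cj.x s - ci.x 0)) t - 1)
        (Set.Icc (-1) 1) ≤ ε / 4 * P ^ 3 := by
      refine csSup_le (hne.image _) ?_
      rintro _ ⟨t, ht, rfl⟩
      have hd : HasDerivAt (fun s => uPes F.f χ ci.x * (Psi F.f χ cj.x s - ci.x 0))
          (uPes F.f χ ci.x * (1 / uPes F.f χ cj.x)) t :=
        ((((hasDerivAt_id t).div_const _).add_const _).sub_const _).const_mul _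
      have := ratio_bound k1 k2 hP k3 k4
      simp only [hd.deriv]
      rwa [mul_one_div]
    have : 0 < ε * P ^ 3 := by positivity
    linarith


end OneDim
end
end

section
/- Assume f satisfies (A1)–(A3) and fix χ > 0. There is ε₀ > 0 such that for all 0 < ε < ε₀: if there is a weak edge Ψ_{ŷ}^q ⤎ Ψ_{x̂}^p between ε-charts, then: (1) G_{x̂,ŷ}([−p, p]) ⊂ [−q, q]; (2) if z ∈ Ψ_{x̂}([−p, p]) then g_{x̂}(z) is the unique point y ∈ Ψ_{ŷ}([−q, q]) with f(y) = z. -/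
open Real MeasureTheory Filter Topology Metric Set

noncomputable section

namespace OneDim

/-- The summand in the definition of `u`. -/
def uTerm (f : ℝ → ℝ) (χ : ℝ) (x : ℤ → ℝ) (n : ℕ) : ℝ :=
  Real.exp (2 * (n:ℝ) * χ) * (dfhat f x (-(n:ℤ))) ^ 2

lemma uTerm_nonneg (f : ℝ → ℝ) (χ : ℝ) (x : ℤ → ℝ) (n : ℕ) : 0 ≤ uTerm f χ x n := by
  unfold uTerm; positivity

lemma uTerm_zero (f : ℝ → ℝ) (χ : ℝ) (x : ℤ → ℝ) : uTerm f χ x 0 = 1 := by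
  unfold uTerm; simp [dfhat]

lemma uTerm_succ (f : ℝ → ℝ) (χ : ℝ) (x : ℤ → ℝ) (n : ℕ) :
    uTerm f χ x (n + 1) =
      (Real.exp χ * (deriv f (x (-1)))⁻¹) ^ 2 * uTerm f χ (fhatI (-1) x) n := by
  unfold uTerm
  rw [dfhat_neg, dfhat_neg, Finset.prod_range_succ']
  have h1 : Real.exp (2 * ((n + 1 : ℕ) : ℝ) * χ) =
      Real.exp χ ^ 2 * Real.exp (2 * (n:ℝ) * χ) := by
    rw [← Real.exp_nat_mul, ← Real.exp_add]; congr 1; push_cast; ring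
  have h2 : ∏ k ∈ Finset.range n, deriv f (x (-((k + 1 : ℕ) : ℤ) - 1)) =
      ∏ j ∈ Finset.range n, deriv f (fhatI (-1) x (-(j : ℤ) - 1)) := by
    refine Finset.prod_congr rfl fun k _ => ?_
    unfold fhatI
    congr 2; push_cast; ring
  rw [h1, h2]
  simp only [Nat.cast_zero, neg_zero, zero_sub, mul_inv]
  ring

lemma uTerm_summable (F : GoodMap) (χ : ℝ) (x : ℤ → ℝ) (hx : x ∈ NUE F χ) :
    Summable (uTerm F.f χ x) := by
  obtain ⟨-, -, -, l, hl, hlim⟩ := hx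
  obtain ⟨m, hm1, hm2⟩ := exists_between hl
  have hev := hlim.eventually (lt_mem_nhds hm2)
  refine Summable.of_norm_bounded_eventually_nat (g := fun n : ℕ => (Real.exp (2 * (χ - m))) ^ n)
    (summable_geometric_of_lt_one (Real.exp_pos _).le ((Real.exp_lt_exp.2 (by linarith : 2 * (χ - m) < 0)).trans_eq Real.exp_zero)) ?_
  filter_upwards [hev, eventually_gt_atTop 0] with n hn hn0
  have hnp : (0:ℝ) < n := by exact_mod_cast hn0
  rw [Real.norm_of_nonneg (uTerm_nonneg _ _ _ _)]
  have h1 : Real.log |dfhat F.f x (-(n:ℤ))| ≤ -(n * m) := by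
    rw [div_neg, lt_neg, div_lt_iff₀ hnp] at hn
    linarith
  have h2 : |dfhat F.f x (-(n:ℤ))| ≤ Real.exp (-(n * m)) :=
    (Real.le_exp_log _).trans (Real.exp_le_exp.2 h1)
  unfold uTerm
  rw [← sq_abs (dfhat F.f x (-(n:ℤ)))]
  calc Real.exp (2 * (n:ℝ) * χ) * |dfhat F.f x (-(n:ℤ))| ^ 2
      ≤ Real.exp (2 * (n:ℝ) * χ) * Real.exp (-(n * m)) ^ 2 := by gcongr
    _ = (Real.exp (2 * (χ - m))) ^ n := by
        rw [← Real.exp_nat_mul, ← Real.exp_nat_mul, ← Real.exp_add]; congr 1; push_cast; ring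

lemma uPes_eq (f : ℝ → ℝ) (χ : ℝ) (x : ℤ → ℝ) :
    uPes f χ x = Real.sqrt (∑' n : ℕ, uTerm f χ x n) := rfl

lemma one_le_uPes (f : ℝ → ℝ) (χ : ℝ) (x : ℤ → ℝ) (h : Summable (uTerm f χ x)) :
    1 ≤ uPes f χ x := by
  rw [uPes_eq, Real.one_le_sqrt, ← uTerm_zero f χ x]
  exact h.le_tsum 0 (fun n _ => uTerm_nonneg _ _ _ n)

lemma deriv_ne_s10 (F : GoodMap) (z : ℝ) (hz : z ∈ Mset) (h : z ∉ F.S) : deriv F.f z ≠ 0 := by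
  intro h0
  exact h (Or.inl ⟨⟨hz, fun hd => h (Or.inr hd)⟩, h0⟩)

lemma uTerm_summable_shift (F : GoodMap) (χ : ℝ) (x : ℤ → ℝ) (hx : x ∈ NUE F χ) :
    Summable (uTerm F.f χ (fhatI (-1) x)) := by
  have h := (summable_nat_add_iff 1).2 (uTerm_summable F χ x hx)
  simp_rw [uTerm_succ] at h
  refine (summable_mul_left_iff ?_).1 h
  have := deriv_ne_s10 F _ (hx.1.1 (-1)) (hx.2.1 (-1))
  positivity

lemma uPes_shift (F : GoodMap) (χ : ℝ) (x : ℤ → ℝ) (hx : x ∈ NUE F χ) :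
    uPes F.f χ (fhatI (-1) x) * |deriv F.f (x (-1))|⁻¹ ≤ Real.exp (-χ) * uPes F.f χ x := by
  have h := (uTerm_summable F χ x hx).tsum_eq_zero_add
  simp_rw [uTerm_succ] at h
  rw [tsum_mul_left, uTerm_zero] at h
  have h3 : Real.exp χ * |deriv F.f (x (-1))|⁻¹ * uPes F.f χ (fhatI (-1) x) ≤ uPes F.f χ x := by
    rw [uPes_eq, uPes_eq F.f χ x]
    apply Real.le_sqrt_of_sq_le
    rw [h, mul_pow, Real.sq_sqrt (tsum_nonneg fun n => uTerm_nonneg _ _ _ n), ← abs_inv, mul_pow,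
      sq_abs, ← mul_pow]
    linarith
  rw [Real.exp_neg, inv_mul_eq_div, le_div_iff₀ (Real.exp_pos _)]
  linarith

lemma dS_le_one (F : GoodMap) (z : ℝ) (hz : z ∈ Mset) : F.dS z ≤ 1 := by
  unfold GoodMap.dS
  rcases F.S.eq_empty_or_nonempty with h | ⟨s, hs⟩
  · rw [h, Metric.infDist_empty]; norm_num
  · refine (Metric.infDist_le_dist_of_mem hs).trans ?_
    have hs' : s ∈ Mset := by
      rcases hs with h | h
      · exact h.1.1
      · exact F.hD h
    rw [Real.dist_eq, abs_le]
    simp only [Mset, Set.mem_Icc] at hz hs'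
    constructor <;> linarith [hz.1, hz.2, hs'.1, hs'.2]

lemma chart_bound (F : GoodMap) (hA : F.SatA) (χ ε : ℝ) (hε : 0 < ε) (hε1 : ε < 1)
    (x : ℤ → ℝ) (p : ℝ) (h : IsChart F χ ε ⟨x, p⟩) :
    p * uPes F.f χ x ≤ ε ∧ p ^ F.β * uPes F.f χ (fhatI (-1) x) ≤ ε ∧
      p < F.r (x 0) ∧ p < F.r (x (-1)) := by
  obtain ⟨hx, hp, hpQ⟩ := h
  simp only at hx hp hpQ
  have hu := one_le_uPes F.f χ x (uTerm_summable F χ x hx)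
  have hv := one_le_uPes F.f χ _ (uTerm_summable_shift F χ x hx)
  have hβ := F.hβ0
  have hβ1 := F.hβ1
  have ha := F.ha
  have hd0 : ∀ n, 0 ≤ F.dS (x n) := fun n => Metric.infDist_nonneg
  have hρ0 : 0 ≤ rho F x := le_min (hd0 _) (le_min (hd0 _) (hd0 _))
  have hρ1 : rho F x ≤ 1 := (min_le_left _ _).trans (dS_le_one F _ (hx.1.1 _))
  set u := uPes F.f χ x
  set v := uPes F.f χ (fhatI (-1) x)
  have hQ0 : 0 ≤ Qtilde F χ ε x := by
    unfold Qtilde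
    exact mul_nonneg (by positivity) (le_min (by positivity) (by positivity))
  have hpT : p ≤ Qtilde F χ ε x := hpQ.trans (Real.sSup_le (fun q hq => hq.2) hQ0)
  unfold Qtilde at hpT
  have hA0 : 0 < ε ^ (3 / F.β) := by positivity
  have hβinv : 1 ≤ 1 / F.β := by rw [le_div_iff₀ hβ]; linarith
  have hAε : ε ^ (3 / F.β) ≤ ε := by
    conv_rhs => rw [← Real.rpow_one ε]
    apply Real.rpow_le_rpow_of_exponent_ge hε hε1.le
    have : 3 / F.β = 3 * (1 / F.β) := by ring
    linarith
  have h1 : p ≤ ε ^ (3 / F.β) * u ^ (-(24 / F.β)) :=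
    hpT.trans (mul_le_mul_of_nonneg_left (min_le_left _ _) hA0.le)
  have h2 : p ≤ ε ^ (3 / F.β) * (v ^ (-(12 / F.β)) * rho F x ^ (72 * F.a / F.β)) :=
    hpT.trans (mul_le_mul_of_nonneg_left (min_le_right _ _) hA0.le)
  have hv0 : v ^ (-(12 / F.β)) ≤ 1 :=
    Real.rpow_le_one_of_one_le_of_nonpos hv (by have : 0 < 12 / F.β := by positivity
                                                linarith)
  have hR1 : rho F x ^ (72 * F.a / F.β) ≤ 1 := Real.rpow_le_one hρ0 hρ1 (by positivity)
  have hupos : 0 < u := by linarith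
  have hvpos : 0 < v := by linarith
  have hV0 : 0 < v ^ (-(12 / F.β)) := by positivity
  have hρpos : 0 < rho F x := by
    rcases hρ0.lt_or_eq with h | h
    · exact h
    · rw [← h, Real.zero_rpow (by positivity)] at h2
      simp at h2; linarith
  have hRa : rho F x ^ (72 * F.a / F.β) ≤ rho F x ^ F.a := by
    apply Real.rpow_le_rpow_of_exponent_ge hρpos hρ1
    have : 72 * F.a / F.β = 72 * F.a * (1 / F.β) := by ring
    rw [this]; nlinarith
  have hpr : p < rho F x ^ F.a := by
    have hpos : 0 < rho F x ^ F.a := by positivity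
    calc p ≤ ε ^ (3 / F.β) * (v ^ (-(12 / F.β)) * rho F x ^ (72 * F.a / F.β)) := h2
      _ ≤ ε * (1 * rho F x ^ F.a) := by gcongr
      _ < rho F x ^ F.a := by nlinarith
  have hmono : ∀ d, rho F x ≤ d → rho F x ^ F.a ≤ d ^ F.a := fun d hd =>
    Real.rpow_le_rpow hρ0 hd (by linarith)
  have r1 : rho F x ≤ F.dS (x (-1)) := min_le_left _ _
  have r2 : rho F x ≤ F.dS (x 0) := (min_le_right _ _).trans (min_le_left _ _)
  have r3 : rho F x ≤ F.dS (x 1) := (min_le_right _ _).trans (min_le_right _ _)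
  have f0 : F.f (x 0) = x 1 := by simpa using hx.1.2 1
  have f1 : F.f (x (-1)) = x 0 := by simpa using hx.1.2 0
  refine ⟨?_, ?_, ?_, ?_⟩
  · have : u ^ (-(24 / F.β)) ≤ u⁻¹ := by
      rw [← Real.rpow_neg_one]
      apply Real.rpow_le_rpow_of_exponent_le hu
      have : 24 / F.β = 24 * (1 / F.β) := by ring
      linarith
    rw [← le_div_iff₀ hupos, div_eq_mul_inv]
    exact h1.trans (by gcongr)
  · have h3 : p ≤ ε ^ (3 / F.β) * v ^ (-(12 / F.β)) := by
      refine h2.trans ?_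
      gcongr
      nlinarith
    have h4 : p ^ F.β ≤ ε ^ (3:ℝ) * v ^ (-12:ℝ) := by
      refine (Real.rpow_le_rpow hp.le h3 hβ.le).trans_eq ?_
      rw [Real.mul_rpow hA0.le hV0.le, ← Real.rpow_mul hε.le, ← Real.rpow_mul hvpos.le]
      congr 2 <;> field_simp
    have h5 : ε ^ (3:ℝ) ≤ ε := by
      conv_rhs => rw [← Real.rpow_one ε]
      exact Real.rpow_le_rpow_of_exponent_ge hε hε1.le (by norm_num)
    have h6 : v ^ (-12:ℝ) ≤ v⁻¹ := by
      rw [← Real.rpow_neg_one]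
      exact Real.rpow_le_rpow_of_exponent_le hv (by norm_num)
    rw [← le_div_iff₀ hvpos, div_eq_mul_inv]
    exact h4.trans (by gcongr)
  · have := (hA (x 0) (hx.1.1 0) (hx.2.1 0) (f0 ▸ hx.2.1 1)).1.1
    rw [f0] at this
    exact hpr.trans ((le_min (hmono _ r2) (hmono _ r3)).trans_lt this)
  · have := (hA (x (-1)) (hx.1.1 _) (hx.2.1 _) (f1 ▸ hx.2.1 0)).1.1
    rw [f1] at this
    exact hpr.trans ((le_min (hmono _ r1) (hmono _ r2)).trans_lt this)

lemma g_bound (F : GoodMap) (hA : F.SatA) (χ ε : ℝ) (hε : 0 < ε) (hε1 : ε < 1)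
    (x : ℤ → ℝ) (p : ℝ) (h : IsChart F χ ε ⟨x, p⟩) (t : ℝ) (ht : |t| ≤ p) :
    F.f (ghat F x (Psi F.f χ x t)) = Psi F.f χ x t ∧
    uPes F.f χ (fhatI (-1) x) * |ghat F x (Psi F.f χ x t) - x (-1)| ≤
      (Real.exp (-χ) + F.K * ε) * p := by
  obtain ⟨b1, b2, -, b4⟩ := chart_bound F hA χ ε hε hε1 x p h
  obtain ⟨hx, hp, -⟩ := h
  simp only at hx hp
  have hu := one_le_uPes F.f χ x (uTerm_summable F χ x hx)
  have hv := one_le_uPes F.f χ _ (uTerm_summable_shift F χ x hx)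
  have hsh := uPes_shift F χ x hx
  have hder := deriv_ne_s10 F _ (hx.1.1 (-1)) (hx.2.1 (-1))
  have f1 : F.f (x (-1)) = x 0 := by simpa using hx.1.2 0
  obtain ⟨-, ⟨-, hfd, hg0, hfg, -, hgd⟩, -, -, hH⟩ :=
    hA (x (-1)) (hx.1.1 _) (hx.2.1 _) (f1 ▸ hx.2.1 0)
  rw [f1] at hg0 hfg hgd hH
  set u := uPes F.f χ x with hudef
  set v := uPes F.f χ (fhatI (-1) x)
  have hupos : 0 < u := by linarith
  have hvpos : 0 < v := by linarith
  have hK := F.hK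
  have hdist : |Psi F.f χ x t - x 0| = |t| / u := by
    unfold Psi
    rw [add_sub_cancel_right, abs_div, ← hudef, abs_of_pos hupos]
  set z := Psi F.f χ x t
  have hzp : |z - x 0| ≤ p / u := by rw [hdist]; gcongr
  have hpu : p / u ≤ p := div_le_self hp.le hu
  have hsub : Metric.closedBall (x 0) (p / u) ⊆ Metric.ball (x 0) (2 * F.r (x (-1))) :=
    Metric.closedBall_subset_ball (by linarith)
  have hx0 : x 0 ∈ Metric.closedBall (x 0) (p / u) := Metric.mem_closedBall_self (by positivity)
  have hz : z ∈ Metric.closedBall (x 0) (p / u) := by rwa [Metric.mem_closedBall, Real.dist_eq]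
  refine ⟨hfg z (hsub hz), ?_⟩
  -- derivative of the inverse branch at the base point
  have hg' : deriv (F.g (x (-1))) (x 0) = (deriv F.f (x (-1)))⁻¹ := by
    have e1 : HasDerivAt (F.g (x (-1))) (deriv (F.g (x (-1))) (x 0)) (x 0) :=
      (hgd _ (hsub hx0)).hasDerivAt
    have e2 : HasDerivAt F.f (deriv F.f (x (-1))) (F.g (x (-1)) (x 0)) := by
      rw [hg0]
      exact (hfd _ (Metric.mem_ball_self (by linarith))).hasDerivAt
    have e3 := e2.comp (x 0) e1
    have e4 : HasDerivAt (F.f ∘ F.g (x (-1))) 1 (x 0) := by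
      refine (hasDerivAt_id (x 0)).congr_of_eventuallyEq ?_
      filter_upwards [Metric.ball_mem_nhds (x 0) (show 0 < 2 * F.r (x (-1)) by linarith)] with w hw
      exact hfg w hw
    have e5 := e3.unique e4
    exact eq_inv_of_mul_eq_one_right e5
  have hbd : ∀ w ∈ Metric.closedBall (x 0) (p / u), ‖deriv (F.g (x (-1))) w‖ ≤
      |deriv F.f (x (-1))|⁻¹ + F.K * p ^ F.β := by
    intro w hw
    have e1 := hH w (hsub hw) (x 0) (hsub hx0)
    rw [hg'] at e1
    rw [Metric.mem_closedBall, Real.dist_eq] at hw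
    have e2 : |w - x 0| ^ F.β ≤ p ^ F.β :=
      Real.rpow_le_rpow (abs_nonneg _) (hw.trans hpu) F.hβ0.le
    have e3 : F.K * |w - x 0| ^ F.β ≤ F.K * p ^ F.β := by gcongr
    have e4 := abs_sub_abs_le_abs_sub (deriv (F.g (x (-1))) w) (deriv F.f (x (-1)))⁻¹
    rw [Real.norm_eq_abs, ← abs_inv]
    linarith
  have hmv := (convex_closedBall (x 0) (p / u)).norm_image_sub_le_of_norm_deriv_le
    (fun w hw => hgd w (hsub hw)) hbd hx0 hz
  rw [hg0, Real.norm_eq_abs, Real.norm_eq_abs] at hmv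
  have hpβ : 0 ≤ p ^ F.β := by positivity
  have hsum : 0 ≤ |deriv F.f (x (-1))|⁻¹ + F.K * p ^ F.β := by positivity
  unfold ghat
  calc v * |F.g (x (-1)) z - x (-1)|
      ≤ v * ((|deriv F.f (x (-1))|⁻¹ + F.K * p ^ F.β) * (p / u)) := by
        gcongr
        exact hmv.trans (by gcongr)
    _ = (v * |deriv F.f (x (-1))|⁻¹) * (p / u) + F.K * (p ^ F.β * v) * (p / u) := by ring
    _ ≤ (Real.exp (-χ) * u) * (p / u) + F.K * ε * p := by gcongr
    _ = (Real.exp (-χ) + F.K * ε) * p := by field_simp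

/-- Lemma 2.8 on weak edges. -/
theorem weak_edge_lemma (F : GoodMap) (hA : F.SatA) (χ : ℝ) (hχ : 0 < χ) :
    ∃ ε₀ > 0, ∀ ε : ℝ, 0 < ε → ε < ε₀ →
      ∀ x y : ℤ → ℝ, ∀ p q : ℝ, WeakEdge F χ ε ⟨y, q⟩ ⟨x, p⟩ →
        Set.MapsTo (Gmap2 F χ x y) (Set.Icc (-p) p) (Set.Icc (-q) q) ∧
        ∀ z ∈ Psi F.f χ x '' Set.Icc (-p) p,
          (ghat F x z ∈ Psi F.f χ y '' Set.Icc (-q) q ∧ F.f (ghat F x z) = z) ∧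
          ∀ w ∈ Psi F.f χ y '' Set.Icc (-q) q, F.f w = z → w = ghat F x z := by
  have hev : ∀ᶠ ε in 𝓝 (0:ℝ),
      (1 + ε) * ((Real.exp (-χ) + F.K * ε) * Real.exp ε) + ε < 1 := by
    have hc : Continuous fun ε : ℝ =>
        (1 + ε) * ((Real.exp (-χ) + F.K * ε) * Real.exp ε) + ε := by fun_prop
    refine (hc.tendsto 0).eventually (gt_mem_nhds ?_)
    simpa using hχ
  obtain ⟨δ, hδ, hball⟩ := Metric.eventually_nhds_iff.1 hev
  refine ⟨min δ 1, by positivity, ?_⟩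
  intro ε hε hεlt x y p q hW
  have hε1 : ε < 1 := hεlt.trans_le (min_le_right _ _)
  have hsmall := hball (y := ε) (by
    rw [Real.dist_eq, sub_zero, abs_of_pos hε]; exact hεlt.trans_le (min_le_left _ _))
  obtain ⟨hy, hx, ⟨-, -, hov⟩, hpq⟩ := hW
  simp only at hov hpq
  obtain ⟨c1, -, c3, -⟩ := chart_bound F hA χ ε hε hε1 y q hy
  have hg := g_bound F hA χ ε hε hε1 x p hx
  have hq : 0 < q := hy.2.1
  have hyN : y ∈ NUE F χ := hy.1
  have hxN : x ∈ NUE F χ := hx.1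
  have hu := one_le_uPes F.f χ y (uTerm_summable F χ y hyN)
  have hv := one_le_uPes F.f χ _ (uTerm_summable_shift F χ x hxN)
  have hf0 : fhatI (-1) x 0 = x (-1) := by simp [fhatI]
  rw [hf0] at hov
  set u := uPes F.f χ y with hudef
  set v := uPes F.f χ (fhatI (-1) x)
  have hupos : 0 < u := by linarith
  have hvpos : 0 < v := by linarith
  have hK := F.hK
  have hq1 : q ≤ 1 := by nlinarith
  have hq8 : (q * q) ^ 4 ≤ q * q := by
    have : q * q ≤ 1 := by nlinarith
    exact pow_le_of_le_one (by positivity) this (by norm_num)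
  have ho1 : |x (-1) - y 0| ≤ q * q := by
    linarith [abs_nonneg (v⁻¹ - u⁻¹)]
  have ho2 : v⁻¹ ≤ u⁻¹ + q * q ∧ u⁻¹ - q * q ≤ v⁻¹ := by
    have : |v⁻¹ - u⁻¹| ≤ q * q := by linarith [abs_nonneg (x (-1) - y 0)]
    rw [abs_le] at this
    constructor <;> linarith [this.1, this.2]
  have huv : u ≤ (1 + ε) * v := by
    have e1 : u * v * (u⁻¹ - q * q) ≤ u * v * v⁻¹ := by
      gcongr; exact ho2.2
    have e2 : u * v * (u⁻¹ - q * q) = v - v * (q * (q * u)) := by field_simp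
    have e3 : u * v * v⁻¹ = u := by field_simp
    have e1' : u * v * v⁻¹ ≤ u * v * (u⁻¹ + q * q) := by
      gcongr; exact ho2.1
    have e2' : u * v * (u⁻¹ + q * q) = v + v * (q * (q * u)) := by field_simp
    have e4 : q * (q * u) ≤ 1 * ε := by gcongr
    have e5 : v * (q * (q * u)) ≤ v * (1 * ε) := by gcongr
    linarith
  have key : ∀ t ∈ Set.Icc (-p) p, |Gmap2 F χ x y t| ≤ q := by
    intro t ht
    have hgt := (hg t (abs_le.2 ht)).2
    unfold Gmap2
    rw [abs_mul, ← hudef, abs_of_pos hupos]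
    set w := ghat F x (Psi F.f χ x t)
    have e1 : |w - y 0| ≤ |w - x (-1)| + |x (-1) - y 0| := abs_sub_le _ _ _
    calc u * |w - y 0| ≤ u * (|w - x (-1)| + |x (-1) - y 0|) := by gcongr
      _ = u * |w - x (-1)| + u * |x (-1) - y 0| := by ring
      _ ≤ ((1 + ε) * v) * |w - x (-1)| + u * (q * q) := by gcongr
      _ = (1 + ε) * (v * |w - x (-1)|) + (q * u) * q := by ring
      _ ≤ (1 + ε) * ((Real.exp (-χ) + F.K * ε) * (Real.exp ε * q)) + ε * q := by
          have e6 : v * |w - x (-1)| ≤ (Real.exp (-χ) + F.K * ε) * (Real.exp ε * q) :=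
            hgt.trans (by gcongr)
          have e7 := mul_le_mul_of_nonneg_left e6 (by linarith : (0:ℝ) ≤ 1 + ε)
          have e8 := mul_le_mul_of_nonneg_right c1 hq.le
          linarith
      _ = ((1 + ε) * ((Real.exp (-χ) + F.K * ε) * Real.exp ε) + ε) * q := by ring
      _ ≤ 1 * q := by gcongr
      _ = q := one_mul q
  have hPsiG : ∀ t, Psi F.f χ y (Gmap2 F χ x y t) = ghat F x (Psi F.f χ x t) := by
    intro t
    unfold Gmap2
    generalize ghat F x (Psi F.f χ x t) = w
    unfold Psi
    rw [← hudef]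
    field_simp
    ring
  have hf1 : F.f (y 0) = y 1 := by simpa using hyN.1.2 1
  have hinj := (hA (y 0) (hyN.1.1 0) (hyN.2.1 0) (hf1 ▸ hyN.2.1 1)).2.1.1
  have hmem : ∀ w ∈ Psi F.f χ y '' Set.Icc (-q) q, w ∈ Metric.ball (y 0) (2 * F.r (y 0)) := by
    rintro _ ⟨s, hs, rfl⟩
    have e1 : |s| ≤ q := abs_le.2 hs
    have e2 : |s| / u ≤ |s| := div_le_self (abs_nonneg _) hu
    rw [Metric.mem_ball, Real.dist_eq]
    unfold Psi
    rw [add_sub_cancel_right, abs_div, ← hudef, abs_of_pos hupos]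
    linarith
  refine ⟨fun t ht => abs_le.1 (key t ht), ?_⟩
  rintro _ ⟨t, ht, rfl⟩
  have hin : ghat F x (Psi F.f χ x t) ∈ Psi F.f χ y '' Set.Icc (-q) q :=
    ⟨_, abs_le.1 (key t ht), hPsiG t⟩
  have hfg := (hg t (abs_le.2 ht)).1
  exact ⟨⟨hin, hfg⟩, fun w hw hfw => hinj (hmem w hw) (hmem _ hin) (hfw.trans hfg.symm)⟩

end OneDim
end
end
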